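/- Let 0<p≤1 and let Y be a regular complex Banach space. (i) The map S_e sending each monomial z↦x z^n (n∈ℕ₀, x∈Y) to the trigonometric monomial t↦x cos(2πnt) extends to an isomorphism from H_p(𝔻,Y) onto H_{p,e}(𝕋,Y). (ii) The map S_o sending each monomial z↦x z^n (n∈ℕ, x∈Y) to t↦x sin(2πnt) extends to an isomorphism from H_{p,0}(𝔻,Y) onto H_{p,o}(𝕋,Y). -/

import Mathlib

/-!
Statement 11: Let `0 < p ≤ 1` and let `Y` be a regular complex Banach space.
(i) The map `S_e` sending each monomial `z ↦ x z^n` (`n ∈ ℕ₀`, `x ∈ Y`) to the trigonometric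
monomial `t ↦ x cos(2πnt)` extends to an isomorphism from `H_p(𝔻,Y)` onto `H_{p,e}(𝕋,Y)`.
(ii) The map `S_o` sending each monomial `z ↦ x z^n` (`n ∈ ℕ`) to `t ↦ x sin(2πnt)` extends
to an isomorphism from `H_{p,0}(𝔻,Y)` onto `H_{p,o}(𝕋,Y)`.

Regularity of `Y` is axiomatized by a bounded real-linear embedding of a real Banach space
`X` with bounded real-linear projections realizing `Y` as (a space isomorphic to) `X^ℂ`.
-/

noncomputable section
open Filter Topology MeasureTheory ENNReal

def I₀ : Set ℝ := Set.Ico (-(1 : ℝ)/2) (1/2)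

def circlePt (r t : ℝ) : ℂ := (r : ℂ) * Complex.exp (2 * Real.pi * t * Complex.I)

def poissonP (r t : ℝ) : ℝ :=
  (((1 : ℂ) + circlePt r t) / ((1 : ℂ) - circlePt r t)).re

def poissonQ (r t : ℝ) : ℝ :=
  (((1 : ℂ) + circlePt r t) / ((1 : ℂ) - circlePt r t)).im

def Smooth1PeriodicC (g : ℝ → ℂ) : Prop := ContDiff ℝ (⊤ : ℕ∞) g ∧ ∀ t, g (t + 1) = g t

def testSeminormC (i : ℕ) (g : ℝ → ℂ) : ℝ :=
  ⨆ t : Set.Icc (0 : ℝ) 1, ‖iteratedDeriv i g t‖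

def IsPeriodicDistributionC {Y : Type*} [NormedAddCommGroup Y] [NormedSpace ℂ Y]
    (u : (ℝ → ℂ) → Y) : Prop :=
  (∀ g h, Smooth1PeriodicC g → Smooth1PeriodicC h → u (g + h) = u g + u h) ∧
  (∀ (c : ℂ) (g), Smooth1PeriodicC g → u (c • g) = c • u g) ∧
  ∃ (k : ℕ) (C : ℝ), ∀ g, Smooth1PeriodicC g →
    ‖u g‖ ≤ C * ∑ i ∈ Finset.range (k + 1), testSeminormC i g

def pConvC {Y : Type*} (u : (ℝ → ℂ) → Y) (r t : ℝ) : Y :=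
  u (fun s => (poissonP r (t - s) : ℂ))

def qConvC {Y : Type*} (u : (ℝ → ℂ) → Y) (r t : ℝ) : Y :=
  u (fun s => (poissonQ r (t - s) : ℂ))

def qHpT {Y : Type*} [NormedAddCommGroup Y] (p : ℝ) (u : (ℝ → ℂ) → Y) : ℝ≥0∞ :=
  ⨆ r : Set.Ico (0 : ℝ) 1,
    (∫⁻ t in I₀, ((‖pConvC u r.1 t‖₊ : ℝ≥0∞) ^ p + (‖qConvC u r.1 t‖₊ : ℝ≥0∞) ^ p)) ^ (1/p)

def memHpT {Y : Type*} [NormedAddCommGroup Y] [NormedSpace ℂ Y] (p : ℝ)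
    (u : (ℝ → ℂ) → Y) : Prop :=
  IsPeriodicDistributionC u ∧ qHpT p u < ⊤

def hpIntegral {Y : Type*} [NormedAddCommGroup Y] (p : ℝ) (F : ℂ → Y) (r : ℝ) : ℝ≥0∞ :=
  ∫⁻ t in I₀, (‖F (circlePt r t)‖₊ : ℝ≥0∞) ^ p

def memHpD {Y : Type*} [NormedAddCommGroup Y] [NormedSpace ℂ Y] (p : ℝ) (F : ℂ → Y) : Prop :=
  DifferentiableOn ℂ F (Metric.ball 0 1) ∧
  ∃ B : ℝ≥0∞, B < ⊤ ∧ ∀ r : ℝ, 0 ≤ r → r < 1 → hpIntegral p F r ≤ B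

def qHpD {Y : Type*} [NormedAddCommGroup Y] (p : ℝ) (F : ℂ → Y) : ℝ≥0∞ :=
  ⨆ r : Set.Ico (0 : ℝ) 1, (hpIntegral p F r.1) ^ (1/p)

/-- An even distribution on the circle. -/
def IsEvenDistr {Y : Type*} [NormedAddCommGroup Y] [NormedSpace ℂ Y]
    (u : (ℝ → ℂ) → Y) : Prop :=
  ∀ g, Smooth1PeriodicC g → u (fun t => g (-t)) = u g

/-- An odd distribution on the circle. -/
def IsOddDistr {Y : Type*} [NormedAddCommGroup Y] [NormedSpace ℂ Y]
    (u : (ℝ → ℂ) → Y) : Prop :=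
  ∀ g, Smooth1PeriodicC g → u (fun t => g (-t)) = -u g

/-!
Let `u` be a distribution of parity `ε = ±1`. Its Herglotz transform is the analytic function
`H(z) = û(0) + 2 ∑ₙ û(n) zⁿ`, whose value at `z = r e^{2πit}` is `(P_r * u)(t) + i (Q_r * u)(t)`.
Conversely, by parity `P_r * u` and `i Q_r * u` at `t` are the combinations
`(H(z) ± ε H(conj z)) / 2`. Hence the quasi-norms of `u` and `H` are equivalent, with no need for a
Hilbert transform. On coefficients the Herglotz transform inverts the map taking `F` to the part of
parity `ε` of its boundary value, which is the cosine map for `ε = 1` and, up to the factor `i`, the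
sine map for `ε = -1`. The boundary value is a distribution because functions in `H_p` satisfy the
Hardy–Littlewood bound `‖F(z)‖ ≤ C (1 - |z|)^{-1/p}`, so their Taylor coefficients grow
polynomially.
-/

/-! ### Test functions and their Fourier series -/

/-- The exponential `e_n(t) = exp(2πint)`, read off Mathlib's Fourier monomials on `ℝ/ℤ`. -/
def expMonomial (n : ℤ) (t : ℝ) : ℂ := fourier n (t : UnitAddCircle)

lemma expMonomial_eq_exp (n : ℤ) (t : ℝ) :
    expMonomial n t = Complex.exp (2 * Real.pi * n * t * Complex.I) := by
  rw [expMonomial, fourier_coe_apply]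
  congr 1
  push_cast
  ring

lemma expMonomial_comp_neg (n : ℤ) (t : ℝ) : expMonomial n (-t) = expMonomial (-n) t := by
  simp only [expMonomial_eq_exp]
  congr 1
  push_cast
  ring

lemma expMonomial_add_one (n : ℤ) (t : ℝ) : expMonomial n (t + 1) = expMonomial n t := by
  simp [expMonomial]

lemma norm_expMonomial (n : ℤ) (t : ℝ) : ‖expMonomial n t‖ = 1 := Circle.norm_coe _

lemma hasDerivAt_expMonomial (n : ℤ) (t : ℝ) :
    HasDerivAt (expMonomial n) (2 * Real.pi * Complex.I * n * expMonomial n t) t :=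
  (hasDerivAt_fourier 1 n t).congr_deriv (by simp [expMonomial])

lemma contDiff_expMonomial (n : ℤ) : ContDiff ℝ (⊤ : ℕ∞) (expMonomial n) := by
  rw [funext (expMonomial_eq_exp n)]
  have : ContDiff ℝ (⊤ : ℕ∞) ((↑) : ℝ → ℂ) := Complex.ofRealCLM.contDiff
  fun_prop

lemma continuous_expMonomial (n : ℤ) : Continuous (expMonomial n) :=
  (contDiff_expMonomial n).continuous

lemma smooth_expMonomial (n : ℤ) : Smooth1PeriodicC (expMonomial n) :=
  ⟨contDiff_expMonomial n, expMonomial_add_one n⟩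

lemma iteratedDeriv_expMonomial (n : ℤ) (i : ℕ) :
    iteratedDeriv i (expMonomial n) =
      fun t => (2 * Real.pi * Complex.I * n) ^ i * expMonomial n t := by
  induction i with
  | zero => simp
  | succ i ih =>
    rw [iteratedDeriv_succ, ih]
    funext t
    rw [((hasDerivAt_expMonomial n t).const_mul _).deriv]
    ring

/-- The space `C^∞(𝕋)` of smooth `1`-periodic functions, as a subspace of all functions. -/
def testSpace : Submodule ℂ (ℝ → ℂ) where
  carrier := {g | Smooth1PeriodicC g}
  zero_mem' := ⟨contDiff_const, fun _ => rfl⟩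
  add_mem' hg hh := ⟨hg.1.add hh.1, fun t => by simp [hg.2, hh.2]⟩
  smul_mem' _ _ hg := ⟨contDiff_const.smul hg.1, fun t => by simp [hg.2]⟩

namespace Smooth1PeriodicC

variable {g : ℝ → ℂ}

lemma comp_neg (hg : Smooth1PeriodicC g) : Smooth1PeriodicC fun t => g (-t) :=
  ⟨hg.1.comp contDiff_neg, fun t => by
    simpa using (hg.2 (-(t + 1))).symm⟩

lemma hasDerivAt (hg : Smooth1PeriodicC g) (t : ℝ) : HasDerivAt g (deriv g t) t :=
  ((contDiff_infty_iff_deriv.1 hg.1).1 t).hasDerivAt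

protected lemma deriv (hg : Smooth1PeriodicC g) : Smooth1PeriodicC (deriv g) :=
  ⟨(contDiff_infty_iff_deriv.1 hg.1).2, fun t => by
    rw [← deriv_comp_add_const, funext hg.2]⟩

protected lemma iteratedDeriv (hg : Smooth1PeriodicC g) (i : ℕ) :
    Smooth1PeriodicC (iteratedDeriv i g) := by
  induction i with
  | zero => simpa using hg
  | succ i ih => simpa only [iteratedDeriv_succ] using ih.deriv

lemma norm_iteratedDeriv_le (hg : Smooth1PeriodicC g) (i : ℕ) (t : ℝ) :
    ‖iteratedDeriv i g t‖ ≤ testSeminormC i g := by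
  have hgi := hg.iteratedDeriv i
  obtain ⟨s, hs, hts⟩ := Function.Periodic.exists_mem_Ico₀ hgi.2 one_pos t
  have hbdd : BddAbove (Set.range fun t : Set.Icc (0 : ℝ) 1 => ‖iteratedDeriv i g t‖) := by
    simpa only [Set.image_eq_range] using
      isCompact_Icc.bddAbove_image (K := Set.Icc (0 : ℝ) 1) hgi.1.continuous.norm.continuousOn
  exact hts ▸ le_ciSup hbdd ⟨s, hs.1, hs.2.le⟩

end Smooth1PeriodicC

lemma testSeminormC_nonneg (i : ℕ) (g : ℝ → ℂ) : 0 ≤ testSeminormC i g :=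
  Real.iSup_nonneg fun _ => norm_nonneg _

lemma testSeminormC_le {g : ℝ → ℂ} {i : ℕ} {C : ℝ} (h : ∀ t, ‖iteratedDeriv i g t‖ ≤ C) :
    testSeminormC i g ≤ C :=
  have : Nonempty (Set.Icc (0 : ℝ) 1) := ⟨⟨0, by simp⟩⟩
  ciSup_le fun t => h t

lemma testSeminormC_comp_neg_le {g : ℝ → ℂ} (hg : Smooth1PeriodicC g) (i : ℕ) :
    testSeminormC i (fun t => g (-t)) ≤ testSeminormC i g :=
  testSeminormC_le fun t => by
    simpa [iteratedDeriv_comp_neg, norm_smul] using hg.norm_iteratedDeriv_le i (-t)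

lemma setIntegral_I₀ {E : Type*} [NormedAddCommGroup E] [NormedSpace ℝ E] (f : ℝ → E) :
    ∫ t in I₀, f t = ∫ t in (-(1 : ℝ) / 2)..(1 / 2), f t := by
  rw [intervalIntegral.integral_of_le (by norm_num), I₀, setIntegral_congr_set Ico_ae_eq_Ioc]

lemma volume_I₀ : volume I₀ = 1 := by
  rw [I₀, Real.volume_Ico]
  norm_num

lemma integrableOn_I₀ {E : Type*} [NormedAddCommGroup E] {f : ℝ → E} (hf : Continuous f) :
    IntegrableOn f I₀ :=
  hf.integrableOn_Icc.mono_set Set.Ico_subset_Icc_self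

lemma norm_setIntegral_I₀_le {E : Type*} [NormedAddCommGroup E] [NormedSpace ℝ E]
    {f : ℝ → E} {C : ℝ} (h : ∀ t, ‖f t‖ ≤ C) : ‖∫ t in I₀, f t‖ ≤ C := by
  simpa [Measure.real, volume_I₀] using
    norm_setIntegral_le_of_norm_le_const (μ := volume) (s := I₀) (by simp [volume_I₀])
      fun t _ => h t

/-- The Fourier coefficient `ĝ(n) = ∫ g e_{-n}` of a function on `ℝ`, over the fundamental domain
`I₀` of the statement. -/
def testCoeff (g : ℝ → ℂ) (n : ℤ) : ℂ := ∫ t in I₀, g t * expMonomial (-n) t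

lemma testCoeff_add {g h : ℝ → ℂ} (hg : Continuous g) (hh : Continuous h) (n : ℤ) :
    testCoeff (g + h) n = testCoeff g n + testCoeff h n := by
  simp only [testCoeff, Pi.add_apply, add_mul]
  exact integral_add (integrableOn_I₀ (hg.mul (continuous_expMonomial _)))
    (integrableOn_I₀ (hh.mul (continuous_expMonomial _)))

lemma testCoeff_smul (c : ℂ) (g : ℝ → ℂ) (n : ℤ) :
    testCoeff (c • g) n = c * testCoeff g n := by
  simp only [testCoeff, Pi.smul_apply, smul_eq_mul, mul_assoc]
  exact integral_const_mul _ _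

lemma testCoeff_comp_neg (g : ℝ → ℂ) (n : ℤ) :
    testCoeff (fun t => g (-t)) n = testCoeff g (-n) := by
  have h := intervalIntegral.integral_comp_neg (a := -(1 : ℝ) / 2) (b := 1 / 2)
    fun t => g t * expMonomial (- -n) t
  rw [neg_div, neg_neg] at h
  simpa only [testCoeff, setIntegral_I₀, expMonomial_comp_neg, neg_div, neg_neg] using h

lemma norm_testCoeff_le {g : ℝ → ℂ} {C : ℝ} (h : ∀ t, ‖g t‖ ≤ C) (n : ℤ) :
    ‖testCoeff g n‖ ≤ C :=
  norm_setIntegral_I₀_le fun t => by simpa [norm_expMonomial] using h t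

namespace Smooth1PeriodicC

variable {g : ℝ → ℂ}

lemma testCoeff_deriv (hg : Smooth1PeriodicC g) (n : ℤ) :
    testCoeff (deriv g) n = 2 * Real.pi * Complex.I * n * testCoeff g n := by
  have hparts := intervalIntegral.integral_deriv_mul_eq_sub (a := -(1 : ℝ) / 2) (b := 1 / 2)
    (fun t _ => hg.hasDerivAt t) (fun t _ => hasDerivAt_expMonomial (-n) t)
    (hg.deriv.1.continuous.intervalIntegrable _ _)
    ((continuous_const.mul (continuous_expMonomial _)).intervalIntegrable _ _)
  have hg_ends : g (1 / 2) = g (-1 / 2) := by rw [← hg.2 (-1 / 2)]; norm_num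
  have he_ends : expMonomial (-n) (1 / 2) = expMonomial (-n) (-1 / 2) := by
    rw [← expMonomial_add_one (-n) (-1 / 2)]; norm_num
  rw [hg_ends, he_ends, sub_self, ← setIntegral_I₀, integral_add] at hparts
  · have hfactor (t : ℝ) : g t * (2 * Real.pi * Complex.I * ↑(-n) * expMonomial (-n) t) =
        2 * Real.pi * Complex.I * ↑(-n) * (g t * expMonomial (-n) t) := by ring
    simp only [hfactor, integral_const_mul] at hparts
    push_cast at hparts
    simp only [testCoeff]
    linear_combination hparts
  · exact integrableOn_I₀ (hg.deriv.1.continuous.mul (continuous_expMonomial _))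
  · exact integrableOn_I₀
      (hg.1.continuous.mul (continuous_const.mul (continuous_expMonomial _)))

lemma testCoeff_iteratedDeriv (hg : Smooth1PeriodicC g) (n : ℤ) (i : ℕ) :
    testCoeff (iteratedDeriv i g) n = (2 * Real.pi * Complex.I * n) ^ i * testCoeff g n := by
  induction i with
  | zero => simp
  | succ i ih => rw [iteratedDeriv_succ, (hg.iteratedDeriv i).testCoeff_deriv, ih]; ring

lemma pow_mul_norm_testCoeff_le (hg : Smooth1PeriodicC g) (n : ℤ) (i : ℕ) :
    |(n : ℝ)| ^ i * ‖testCoeff g n‖ ≤ testSeminormC i g := by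
  have hn : |(n : ℝ)| ≤ ‖2 * Real.pi * Complex.I * (n : ℂ)‖ := by
    have h2π : 1 ≤ 2 * Real.pi := by linarith [Real.pi_gt_three]
    simpa [abs_of_pos Real.pi_pos] using le_mul_of_one_le_left (abs_nonneg (n : ℝ)) h2π
  calc |(n : ℝ)| ^ i * ‖testCoeff g n‖
      ≤ ‖2 * Real.pi * Complex.I * (n : ℂ)‖ ^ i * ‖testCoeff g n‖ := by gcongr
    _ = ‖testCoeff (iteratedDeriv i g) n‖ := by
      rw [← norm_pow, ← norm_mul, hg.testCoeff_iteratedDeriv]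
    _ ≤ testSeminormC i g := norm_testCoeff_le (hg.norm_iteratedDeriv_le i) n

lemma norm_testCoeff_mul_pow_le (hg : Smooth1PeriodicC g) (n : ℤ) (k : ℕ) :
    ‖testCoeff g n‖ * (|(n : ℝ)| + 1) ^ k ≤
      2 ^ k * ∑ i ∈ Finset.range (k + 1), testSeminormC i g := by
  have hterm {i : ℕ} (hi : i ≤ k) :
      |(n : ℝ)| ^ i * ‖testCoeff g n‖ ≤ ∑ i ∈ Finset.range (k + 1), testSeminormC i g :=
    (hg.pow_mul_norm_testCoeff_le n i).trans <|
      Finset.single_le_sum (f := fun i => testSeminormC i g)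
        (fun i _ => testSeminormC_nonneg i g) (by simp; lia)
  have hpow : (|(n : ℝ)| + 1) ^ k ≤ 2 ^ k * max 1 (|(n : ℝ)| ^ k) := by
    rcases le_total |(n : ℝ)| 1 with h | h
    · calc (|(n : ℝ)| + 1) ^ k ≤ 2 ^ k := by gcongr; linarith
        _ ≤ 2 ^ k * max 1 (|(n : ℝ)| ^ k) := le_mul_of_one_le_right (by positivity) (le_max_left ..)
    · calc (|(n : ℝ)| + 1) ^ k ≤ (2 * |(n : ℝ)|) ^ k := by gcongr; linarith
        _ ≤ 2 ^ k * max 1 (|(n : ℝ)| ^ k) := by rw [mul_pow]; gcongr; exact le_max_right ..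
  calc ‖testCoeff g n‖ * (|(n : ℝ)| + 1) ^ k
      ≤ ‖testCoeff g n‖ * (2 ^ k * max 1 (|(n : ℝ)| ^ k)) := by gcongr
    _ = 2 ^ k * max (|(n : ℝ)| ^ 0 * ‖testCoeff g n‖) (|(n : ℝ)| ^ k * ‖testCoeff g n‖) := by
      rw [← max_mul_of_nonneg _ _ (norm_nonneg _), pow_zero]; ring
    _ ≤ 2 ^ k * ∑ i ∈ Finset.range (k + 1), testSeminormC i g := by
      gcongr
      exact max_le (hterm (Nat.zero_le k)) (hterm le_rfl)

lemma summable_testCoeff (hg : Smooth1PeriodicC g) : Summable (testCoeff g) := by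
  have hsq : Summable fun n : ℤ => testSeminormC 2 g * (1 / (n : ℝ) ^ 2) :=
    (Real.summable_one_div_int_pow.2 one_lt_two).mul_left _
  refine hsq.of_norm_bounded_eventually ?_
  filter_upwards [(Set.finite_singleton (0 : ℤ)).compl_mem_cofinite] with n hn
  have hn0 : (n : ℝ) ≠ 0 := by simpa using hn
  have h := hg.pow_mul_norm_testCoeff_le n 2
  rw [sq_abs] at h
  rw [mul_one_div, le_div_iff₀ (by positivity)]
  linarith

/-- A test function as a continuous function on Mathlib's circle `ℝ/ℤ`. -/
def toCircle (hg : Smooth1PeriodicC g) : C(UnitAddCircle, ℂ) :=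
  ⟨Function.Periodic.lift hg.2, continuous_coinduced_dom.mpr hg.1.continuous⟩

lemma toCircle_coe (hg : Smooth1PeriodicC g) (t : ℝ) : hg.toCircle t = g t := rfl

lemma fourierCoeff_toCircle (hg : Smooth1PeriodicC g) (n : ℤ) :
    fourierCoeff hg.toCircle n = testCoeff g n := by
  rw [fourierCoeff_eq_intervalIntegral _ _ (-(1 : ℝ) / 2), testCoeff, setIntegral_I₀,
    one_div_one, one_smul, show -(1 : ℝ) / 2 + 1 = 1 / 2 by norm_num]
  simp only [toCircle_coe, smul_eq_mul, mul_comm, expMonomial]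

end Smooth1PeriodicC

lemma testCoeff_expMonomial (m n : ℤ) :
    testCoeff (expMonomial m) n = if m = n then 1 else 0 := by
  have h : (smooth_expMonomial m).toCircle = fourier m := by
    ext x
    induction x using QuotientAddGroup.induction_on with
    | H t => rfl
  rw [← (smooth_expMonomial m).fourierCoeff_toCircle, h, fourierCoeff_fourier, Pi.single_apply]
  simp only [eq_comm]

/-- The error `g - ∑_{n ∈ s} ĝ(n) e_n` of a partial Fourier sum. -/
def fourierRemainder (s : Finset ℤ) (g : ℝ → ℂ) : ℝ → ℂ :=
  g - ∑ n ∈ s, testCoeff g n • expMonomial n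

namespace Smooth1PeriodicC

variable {g : ℝ → ℂ}

protected lemma fourierRemainder (hg : Smooth1PeriodicC g) (s : Finset ℤ) :
    Smooth1PeriodicC (fourierRemainder s g) :=
  testSpace.sub_mem hg <| testSpace.sum_mem fun n _ =>
    testSpace.smul_mem _ (smooth_expMonomial n)

lemma deriv_fourierRemainder (hg : Smooth1PeriodicC g) (s : Finset ℤ) :
    deriv (fourierRemainder s g) = fourierRemainder s (deriv g) := by
  funext t
  have hsum : HasDerivAt (∑ n ∈ s, testCoeff g n • expMonomial n)
      (∑ n ∈ s, testCoeff g n • (2 * Real.pi * Complex.I * n * expMonomial n t)) t :=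
    HasDerivAt.sum fun n _ => (hasDerivAt_expMonomial n t).const_smul _
  refine ((hg.hasDerivAt t).sub hsum).deriv.trans ?_
  simp only [fourierRemainder, Pi.sub_apply, Finset.sum_apply, Pi.smul_apply, smul_eq_mul,
    hg.testCoeff_deriv]
  congr! 2
  ring

lemma iteratedDeriv_fourierRemainder (hg : Smooth1PeriodicC g) (s : Finset ℤ) (i : ℕ) :
    iteratedDeriv i (fourierRemainder s g) =
      fourierRemainder s (iteratedDeriv i g) := by
  induction i with
  | zero => simp
  | succ i ih =>
    rw [iteratedDeriv_succ, ih, (hg.iteratedDeriv i).deriv_fourierRemainder, iteratedDeriv_succ]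

lemma eventually_norm_fourierRemainder_le (hg : Smooth1PeriodicC g) {ε : ℝ} (hε : 0 < ε) :
    ∀ᶠ s : Finset ℤ in atTop, ∀ t, ‖fourierRemainder s g t‖ ≤ ε := by
  have hsum : HasSum (fun n => testCoeff g n • fourier n) hg.toCircle := by
    simpa only [hg.fourierCoeff_toCircle] using hasSum_fourier_series_of_summable
      (hg.summable_testCoeff.congr fun n => (hg.fourierCoeff_toCircle n).symm)
  filter_upwards [Metric.tendsto_nhds.1 hsum ε hε] with s hs t
  rw [dist_comm, dist_eq_norm] at hs
  refine le_trans (le_of_eq ?_) ((ContinuousMap.norm_coe_le_norm _ (t : UnitAddCircle)).trans hs.le)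
  simp [fourierRemainder, expMonomial, hg.toCircle_coe]

lemma tendsto_testSeminormC_fourierRemainder (hg : Smooth1PeriodicC g) (i : ℕ) :
    Tendsto (fun s : Finset ℤ => testSeminormC i (fourierRemainder s g)) atTop (𝓝 0) := by
  refine tendsto_order.2 ⟨fun a ha => .of_forall fun s => ha.trans_le (testSeminormC_nonneg i _),
    fun ε hε => ?_⟩
  filter_upwards [(hg.iteratedDeriv i).eventually_norm_fourierRemainder_le (half_pos hε)] with s hs
  refine (testSeminormC_le fun t => ?_).trans_lt (half_lt_self hε)
  rw [hg.iteratedDeriv_fourierRemainder]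
  exact hs t

end Smooth1PeriodicC

/-! ### Distributions on the circle -/

/-- At most polynomial growth, the condition on the Fourier coefficients of a distribution. -/
def HasPolyGrowth {Y : Type*} [Norm Y] (a : ℕ → Y) : Prop :=
  ∃ (k : ℕ) (C : ℝ), ∀ n : ℕ, ‖a n‖ ≤ C * ((n : ℝ) + 1) ^ k

/-- Distributions that are multiplied by `ε` under `t ↦ -t`: even for `ε = 1`, odd for
`ε = -1`. -/
def HasParity {Y : Type*} [SMul ℂ Y] (ε : ℂ) (u : (ℝ → ℂ) → Y) : Prop :=
  ∀ g, Smooth1PeriodicC g → u (fun t => g (-t)) = ε • u g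

section Distributions

variable {Y : Type*} [NormedAddCommGroup Y] [NormedSpace ℂ Y] {u v : (ℝ → ℂ) → Y}

lemma isEvenDistr_iff_hasParity : IsEvenDistr u ↔ HasParity 1 u := by
  simp only [IsEvenDistr, HasParity, one_smul]

lemma isOddDistr_iff_hasParity : IsOddDistr u ↔ HasParity (-1) u := by
  simp only [IsOddDistr, HasParity, neg_one_smul]

lemma HasParity.apply_expMonomial {ε : ℂ} (hpar : HasParity ε u) (n : ℤ) :
    u (expMonomial (-n)) = ε • u (expMonomial n) := by
  rw [← hpar _ (smooth_expMonomial n), funext (expMonomial_comp_neg n)]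

lemma HasParity.const_smul {ε : ℂ} (hu : HasParity ε u) (c : ℂ) : HasParity ε (c • u) :=
  fun g hg => by simp only [Pi.smul_apply, hu g hg, smul_comm c ε]

namespace IsPeriodicDistributionC

/-- A distribution as a linear functional on the space of test functions. -/
def toLinearMap (hu : IsPeriodicDistributionC u) : testSpace →ₗ[ℂ] Y where
  toFun g := u g
  map_add' g h := hu.1 g h g.2 h.2
  map_smul' c g := hu.2.1 c g g.2

lemma exists_bound (hu : IsPeriodicDistributionC u) :
    ∃ (k₀ : ℕ) (C : ℝ), 0 ≤ C ∧ ∀ k ≥ k₀, ∀ g, Smooth1PeriodicC g →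
      ‖u g‖ ≤ C * ∑ i ∈ Finset.range (k + 1), testSeminormC i g := by
  obtain ⟨k₀, C, hC⟩ := hu.2.2
  refine ⟨k₀, max C 0, le_max_right C 0, fun k hk g hg => (hC g hg).trans ?_⟩
  have hsum : ∑ i ∈ Finset.range (k₀ + 1), testSeminormC i g ≤
      ∑ i ∈ Finset.range (k + 1), testSeminormC i g :=
    Finset.sum_le_sum_of_subset_of_nonneg (Finset.range_mono (by lia))
      fun i _ _ => testSeminormC_nonneg i g
  exact mul_le_mul (le_max_left C 0) hsum
    (Finset.sum_nonneg fun i _ => testSeminormC_nonneg i g) (le_max_right C 0)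

lemma add (hu : IsPeriodicDistributionC u) (hv : IsPeriodicDistributionC v) :
    IsPeriodicDistributionC (u + v) := by
  obtain ⟨k, C, -, hC⟩ := hu.exists_bound
  obtain ⟨l, D, -, hD⟩ := hv.exists_bound
  refine ⟨fun g h hg hh => ?_, fun c g hg => ?_, max k l, C + D, fun g hg => ?_⟩
  · simp only [Pi.add_apply, hu.1 g h hg hh, hv.1 g h hg hh]
    abel
  · simp only [Pi.add_apply, hu.2.1 c g hg, hv.2.1 c g hg, smul_add]
  · rw [add_mul]
    exact norm_add_le_of_le (hC _ (le_max_left k l) g hg) (hD _ (le_max_right k l) g hg)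

lemma const_smul (hu : IsPeriodicDistributionC u) (c : ℂ) :
    IsPeriodicDistributionC (c • u) := by
  obtain ⟨k, C, hC⟩ := hu.2.2
  refine ⟨fun g h hg hh => ?_, fun d g hg => ?_, k, ‖c‖ * C, fun g hg => ?_⟩
  · simp only [Pi.smul_apply, hu.1 g h hg hh, smul_add]
  · simp only [Pi.smul_apply, hu.2.1 d g hg, smul_comm c d]
  · rw [Pi.smul_apply, norm_smul, mul_assoc]
    gcongr
    exact hC g hg

lemma reflect (hu : IsPeriodicDistributionC u) :
    IsPeriodicDistributionC fun g => u fun t => g (-t) := by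
  obtain ⟨k, C, hC0, hC⟩ := hu.exists_bound
  refine ⟨fun g h hg hh => hu.1 _ _ hg.comp_neg hh.comp_neg,
    fun c g hg => hu.2.1 c _ hg.comp_neg, k, C, fun g hg => ?_⟩
  refine (hC k le_rfl _ hg.comp_neg).trans ?_
  gcongr with i
  exact testSeminormC_comp_neg_le hg i

lemma apply_fourierRemainder (hu : IsPeriodicDistributionC u) {g : ℝ → ℂ}
    (hg : Smooth1PeriodicC g) (s : Finset ℤ) :
    u (fourierRemainder s g) = u g - ∑ n ∈ s, testCoeff g n • u (expMonomial n) := by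
  let e (n : ℤ) : testSpace := ⟨expMonomial n, smooth_expMonomial n⟩
  have hcoe : fourierRemainder s g = ((⟨g, hg⟩ - ∑ n ∈ s, testCoeff g n • e n : testSpace) :) := by
    simp [fourierRemainder, e]
  calc u (fourierRemainder s g) = hu.toLinearMap (⟨g, hg⟩ - ∑ n ∈ s, testCoeff g n • e n) := by
        rw [hcoe]; rfl
    _ = _ := by simp only [map_sub, map_sum, map_smul]; rfl

lemma hasSum (hu : IsPeriodicDistributionC u) {g : ℝ → ℂ} (hg : Smooth1PeriodicC g) :
    HasSum (fun n : ℤ => testCoeff g n • u (expMonomial n)) (u g) := by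
  obtain ⟨k, C, hC⟩ := hu.2.2
  have hbound : Tendsto (fun s => C * ∑ i ∈ Finset.range (k + 1),
      testSeminormC i (fourierRemainder s g)) atTop (𝓝 0) := by
    simpa using (tendsto_finsetSum (Finset.range (k + 1)) fun i _ =>
      hg.tendsto_testSeminormC_fourierRemainder i).const_mul C
  have hrem : Tendsto (fun s => u (fourierRemainder s g)) atTop (𝓝 0) :=
    squeeze_zero_norm (fun s => hC _ (hg.fourierRemainder s)) hbound
  have h := (tendsto_const_nhds (x := u g)).sub hrem
  simp only [hu.apply_fourierRemainder hg, _root_.sub_sub_cancel, sub_zero] at h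
  exact h

lemma ext_expMonomial (hu : IsPeriodicDistributionC u) (hv : IsPeriodicDistributionC v)
    (h : ∀ n, u (expMonomial n) = v (expMonomial n)) {g : ℝ → ℂ} (hg : Smooth1PeriodicC g) :
    u g = v g := by
  have hug := hu.hasSum hg
  simp only [h] at hug
  exact hug.unique (hv.hasSum hg)

lemma hasPolyGrowth (hu : IsPeriodicDistributionC u) :
    HasPolyGrowth fun n : ℕ => u (expMonomial (-n)) := by
  obtain ⟨k, C, hC0, hC⟩ := hu.exists_bound
  refine ⟨k, C * ((k + 1) * (2 * Real.pi) ^ k), fun n => ?_⟩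
  have h2π : 1 ≤ 2 * Real.pi := by linarith [Real.pi_gt_three]
  have hseminorm (i : ℕ) (hi : i ∈ Finset.range (k + 1)) :
      testSeminormC i (expMonomial (-n)) ≤ (2 * Real.pi * (n + 1)) ^ k := by
    refine testSeminormC_le fun t => ?_
    calc ‖iteratedDeriv i (expMonomial (-n)) t‖ = (2 * Real.pi * n) ^ i := by
          simp [iteratedDeriv_expMonomial, norm_expMonomial, abs_of_pos Real.pi_pos]
      _ ≤ (2 * Real.pi * (n + 1)) ^ i := by gcongr; linarith
      _ ≤ (2 * Real.pi * (n + 1)) ^ k := by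
          refine pow_le_pow_right₀ (one_le_mul_of_one_le_of_one_le h2π ?_) (by simp at hi; lia)
          linarith [n.cast_nonneg (α := ℝ)]
  calc ‖u (expMonomial (-n))‖
      ≤ C * ∑ i ∈ Finset.range (k + 1), testSeminormC i (expMonomial (-n)) :=
        hC k le_rfl _ (smooth_expMonomial _)
    _ ≤ C * ((k + 1) * (2 * Real.pi * (n + 1)) ^ k) := by
        gcongr
        simpa using Finset.sum_le_card_nsmul _ _ _ hseminorm
    _ = C * ((k + 1) * (2 * Real.pi) ^ k) * (n + 1) ^ k := by rw [mul_pow]; ring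

end IsPeriodicDistributionC

/-- The projection `u ↦ (u + ε ǔ) / 2`, with `ǔ` the reflection of `u`, onto the distributions of
parity `ε = ±1`. -/
def parityPart (ε : ℂ) : ((ℝ → ℂ) → Y) →ₗ[ℂ] ((ℝ → ℂ) → Y) :=
  (1 / 2 : ℂ) • (LinearMap.id + ε • LinearMap.funLeft ℂ Y fun g t => g (-t))

lemma parityPart_apply (ε : ℂ) (u : (ℝ → ℂ) → Y) (g : ℝ → ℂ) :
    parityPart ε u g = (1 / 2 : ℂ) • (u g + ε • u fun t => g (-t)) := rfl

lemma parityPart_expMonomial (ε : ℂ) (u : (ℝ → ℂ) → Y) (n : ℤ) :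
    parityPart ε u (expMonomial n) =
      (1 / 2 : ℂ) • (u (expMonomial n) + ε • u (expMonomial (-n))) := by
  rw [parityPart_apply, funext (expMonomial_comp_neg n)]

lemma IsPeriodicDistributionC.parityPart (hu : IsPeriodicDistributionC u) (ε : ℂ) :
    IsPeriodicDistributionC (parityPart ε u) :=
  (hu.add (hu.reflect.const_smul ε)).const_smul (1 / 2)

lemma hasParity_parityPart {ε : ℂ} (hε : ε ^ 2 = 1) (u : (ℝ → ℂ) → Y) :
    HasParity ε (parityPart ε u) := fun g _ => by
  simp only [parityPart_apply, neg_neg]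
  linear_combination (norm := module) (-1 / 2 : ℂ) • hε • u fun t => g (-t)

lemma norm_testCoeff_smul_le_of_polyGrowth {a : ℕ → Y} (k : ℕ) (C : ℝ)
    (ha : ∀ n : ℕ, ‖a n‖ ≤ C * ((n : ℝ) + 1) ^ k)
    {g : ℝ → ℂ} (hg : Smooth1PeriodicC g) (n : ℕ) :
    ‖testCoeff g (-n) • a n‖ ≤ C * (2 ^ (k + 2) *
      ∑ i ∈ Finset.range (k + 3), testSeminormC i g) * (1 / ((n : ℝ) + 1) ^ 2) := by
  have hC : 0 ≤ C := by simpa using (norm_nonneg _).trans (ha 0)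
  have hdecay := hg.norm_testCoeff_mul_pow_le (-n) (k + 2)
  rw [Int.cast_neg, abs_neg, Int.cast_natCast, Nat.abs_cast] at hdecay
  rw [mul_one_div, le_div_iff₀ (by positivity), norm_smul]
  calc ‖testCoeff g (-n)‖ * ‖a n‖ * ((n : ℝ) + 1) ^ 2
      ≤ ‖testCoeff g (-n)‖ * (C * ((n : ℝ) + 1) ^ k) * ((n : ℝ) + 1) ^ 2 := by gcongr; exact ha n
    _ = C * (‖testCoeff g (-n)‖ * ((n : ℝ) + 1) ^ (k + 2)) := by ring
    _ ≤ C * (2 ^ (k + 2) * ∑ i ∈ Finset.range (k + 3), testSeminormC i g) := by gcongr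

lemma summable_one_div_add_one_sq : Summable fun n : ℕ => 1 / ((n : ℝ) + 1) ^ 2 := by
  simpa using (summable_nat_add_iff 1).2 (Real.summable_one_div_nat_pow.2 one_lt_two)

lemma HasPolyGrowth.summable_testCoeff_smul [CompleteSpace Y] {a : ℕ → Y} (ha : HasPolyGrowth a)
    {g : ℝ → ℂ} (hg : Smooth1PeriodicC g) :
    Summable fun n : ℕ => testCoeff g (-n) • a n := by
  obtain ⟨k, C, hC⟩ := ha
  exact .of_norm_bounded (summable_one_div_add_one_sq.mul_left _)
    (norm_testCoeff_smul_le_of_polyGrowth k C hC hg)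

lemma HasPolyGrowth.isPeriodicDistributionC {a : ℕ → Y} (ha : HasPolyGrowth a)
    (hu : ∀ g, Smooth1PeriodicC g → HasSum (fun n : ℕ => testCoeff g (-n) • a n) (u g)) :
    IsPeriodicDistributionC u := by
  refine ⟨fun g h hg hh => ?_, fun c g hg => ?_, ?_⟩
  · refine (hu _ (testSpace.add_mem hg hh)).unique ?_
    simpa only [testCoeff_add hg.1.continuous hh.1.continuous, add_smul] using
      (hu g hg).add (hu h hh)
  · refine (hu _ (testSpace.smul_mem c hg)).unique ?_
    simpa only [testCoeff_smul, mul_smul] using (hu g hg).const_smul c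
  · obtain ⟨k, C, hC⟩ := ha
    refine ⟨k + 2, C * 2 ^ (k + 2) * ∑' n : ℕ, 1 / ((n : ℝ) + 1) ^ 2, fun g hg => ?_⟩
    refine ((hu g hg).norm_le_of_bounded (summable_one_div_add_one_sq.hasSum.mul_left _)
      (norm_testCoeff_smul_le_of_polyGrowth k C hC hg)).trans_eq ?_
    ring

end Distributions

/-! ### The Herglotz transform -/

lemma circlePt_eq_mul_expMonomial (r t : ℝ) : circlePt r t = r * expMonomial 1 t := by
  simp [circlePt, expMonomial_eq_exp]

lemma norm_circlePt {r : ℝ} (hr : 0 ≤ r) (t : ℝ) : ‖circlePt r t‖ = r := by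
  rw [circlePt_eq_mul_expMonomial, norm_mul, norm_expMonomial, mul_one,
    Complex.norm_of_nonneg hr]

lemma circlePt_sub (r t s : ℝ) : circlePt r (t - s) = circlePt r t * expMonomial (-1) s := by
  simp only [circlePt, expMonomial_eq_exp, mul_assoc, ← Complex.exp_add]
  congr 2
  push_cast
  ring

lemma circlePt_neg (r t : ℝ) : circlePt r (-t) = (starRingEnd ℂ) (circlePt r t) := by
  simp [circlePt, ← Complex.exp_conj, Complex.conj_ofNat]

lemma continuous_circlePt (r : ℝ) : Continuous (circlePt r) := by
  unfold circlePt
  fun_prop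

lemma mul_expMonomial_neg_one_pow (z : ℂ) (s : ℝ) (m : ℕ) :
    (z * expMonomial (-1) s) ^ m = z ^ m * expMonomial (-m) s := by
  rw [mul_pow, expMonomial_eq_exp, expMonomial_eq_exp, ← Complex.exp_nat_mul]
  congr 2
  push_cast
  ring

/-- The Herglotz kernel `(1 + z e_{-1}) / (1 - z e_{-1})`: at `z = re^{2πit}` its real and imaginary
parts are `P_r(t - ·)` and `Q_r(t - ·)`. -/
def herglotzKernel (z : ℂ) (s : ℝ) : ℂ :=
  (1 + z * expMonomial (-1) s) / (1 - z * expMonomial (-1) s)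

/-- The analytic function `P_r * u + i Q_r * u` on the disc attached to a distribution `u`. -/
def herglotz {Y : Type*} (u : (ℝ → ℂ) → Y) (z : ℂ) : Y := u (herglotzKernel z)

/-- The Taylor coefficients `1, 2, 2, …` of `(1 + w) / (1 - w)`. -/
def herglotzCoeff (m : ℕ) : ℂ := if m = 0 then 1 else 2

lemma norm_herglotzCoeff_le (m : ℕ) : ‖herglotzCoeff m‖ ≤ 2 := by
  unfold herglotzCoeff
  split_ifs <;> simp

lemma one_sub_ne_zero_of_norm_lt_one {w : ℂ} (hw : ‖w‖ < 1) : 1 - w ≠ 0 := by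
  rw [sub_ne_zero]
  rintro rfl
  simp at hw

lemma hasSum_herglotzCoeff_mul_pow {w : ℂ} (hw : ‖w‖ < 1) :
    HasSum (fun m => herglotzCoeff m * w ^ m) ((1 + w) / (1 - w)) := by
  have hne := one_sub_ne_zero_of_norm_lt_one hw
  have h := ((hasSum_geometric_of_norm_lt_one hw).mul_left 2).sub (hasSum_ite_eq 0 (1 : ℂ))
  rw [show (1 + w) / (1 - w) = 2 * (1 - w)⁻¹ - 1 by field_simp; ring]
  refine h.congr_fun fun m => ?_
  unfold herglotzCoeff
  split_ifs with hm
  · norm_num [hm]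
  · ring

lemma norm_mul_expMonomial (z : ℂ) (n : ℤ) (s : ℝ) : ‖z * expMonomial n s‖ = ‖z‖ := by
  rw [norm_mul, norm_expMonomial, mul_one]

lemma smooth_herglotzKernel {z : ℂ} (hz : ‖z‖ < 1) : Smooth1PeriodicC (herglotzKernel z) := by
  have hmul : ContDiff ℝ (⊤ : ℕ∞) fun s => z * expMonomial (-1) s :=
    contDiff_const.mul (contDiff_expMonomial (-1))
  have hden : ContDiff ℝ (⊤ : ℕ∞) fun s => (1 - z * expMonomial (-1) s)⁻¹ :=
    (contDiff_const.sub hmul).inv fun s =>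
      one_sub_ne_zero_of_norm_lt_one (by rwa [norm_mul_expMonomial])
  exact ⟨(contDiff_const.add hmul).mul hden,
    fun s => by simp only [herglotzKernel, expMonomial_add_one]⟩

lemma hasSum_testCoeff {ι : Type*} [Countable ι] {c : ι → ℂ} {φ : ι → ℤ} {g : ℝ → ℂ}
    (hc : Summable fun i => ‖c i‖) (hg : ∀ t, HasSum (fun i => c i * expMonomial (φ i) t) (g t))
    (n : ℤ) : HasSum (fun i => if φ i = n then c i else 0) (testCoeff g n) := by
  have hterm (i : ι) : (if φ i = n then c i else 0) =
      ∫ t in I₀, c i * expMonomial (φ i) t * expMonomial (-n) t := by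
    simp only [mul_assoc, integral_const_mul]
    rw [← testCoeff, testCoeff_expMonomial, mul_ite, mul_one, mul_zero]
  simp only [hterm]
  refine hasSum_integral_of_dominated_convergence (fun i _ => ‖c i‖) (fun i => ?_)
    (fun i => .of_forall fun t => ?_) (.of_forall fun _ => hc) ?_
    (.of_forall fun t => (hg t).mul_right _)
  · exact ((continuous_const.mul (continuous_expMonomial _)).mul
      (continuous_expMonomial _)).aestronglyMeasurable
  · rw [norm_mul_expMonomial, norm_mul_expMonomial]
  · exact integrableOn_const (by simp [volume_I₀])

lemma hasSum_testCoeff_herglotzKernel {z : ℂ} (hz : ‖z‖ < 1) (n : ℤ) :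
    HasSum (fun m : ℕ => if -(m : ℤ) = n then herglotzCoeff m * z ^ m else 0)
      (testCoeff (herglotzKernel z) n) := by
  refine hasSum_testCoeff ?_ (fun s => ?_) n
  · refine .of_norm_bounded ((summable_geometric_of_lt_one (norm_nonneg z) hz).mul_left 2) ?_
    intro m
    rw [norm_norm, norm_mul, norm_pow]
    gcongr
    exact norm_herglotzCoeff_le m
  · simpa only [mul_expMonomial_neg_one_pow, mul_assoc, herglotzKernel] using
      hasSum_herglotzCoeff_mul_pow (w := z * expMonomial (-1) s) (by rwa [norm_mul_expMonomial])

lemma testCoeff_herglotzKernel {z : ℂ} (hz : ‖z‖ < 1) (m : ℕ) :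
    testCoeff (herglotzKernel z) (-m) = herglotzCoeff m * z ^ m := by
  refine (hasSum_testCoeff_herglotzKernel hz (-m)).unique ?_
  simpa only [neg_inj, Nat.cast_inj] using
    hasSum_ite_eq m (herglotzCoeff m * z ^ m) |>.congr_fun fun k => by split_ifs with h <;> simp [h]

lemma testCoeff_herglotzKernel_eq_zero {z : ℂ} (hz : ‖z‖ < 1) {n : ℤ}
    (hn : n ∉ Set.range fun m : ℕ => -(m : ℤ)) : testCoeff (herglotzKernel z) n = 0 := by
  refine (hasSum_testCoeff_herglotzKernel hz n).unique ?_
  simpa only [if_neg fun h => hn ⟨_, h⟩] using hasSum_zero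

section Herglotz

variable {Y : Type*} [NormedAddCommGroup Y] [NormedSpace ℂ Y] {u : (ℝ → ℂ) → Y} {ε : ℂ}

lemma IsPeriodicDistributionC.hasSum_herglotz (hu : IsPeriodicDistributionC u) {z : ℂ}
    (hz : ‖z‖ < 1) :
    HasSum (fun m : ℕ => z ^ m • herglotzCoeff m • u (expMonomial (-m))) (herglotz u z) := by
  have hinj : Function.Injective fun m : ℕ => -(m : ℤ) := neg_injective.comp Nat.cast_injective
  refine ((hinj.hasSum_iff fun n hn => ?_).2 (hu.hasSum (smooth_herglotzKernel hz))).congr_fun ?_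
  · rw [testCoeff_herglotzKernel_eq_zero hz hn, zero_smul]
  · intro m
    simp only [Function.comp_apply, testCoeff_herglotzKernel hz, smul_smul, mul_comm]

lemma conj_herglotzKernel (r t s : ℝ) :
    (starRingEnd ℂ) (herglotzKernel (circlePt r t) s) =
      herglotzKernel (circlePt r (-t)) (-s) := by
  have h : (starRingEnd ℂ) (expMonomial (-1) s) = expMonomial (-1) (-s) := by
    rw [expMonomial_comp_neg]
    exact fourier_neg.symm
  simp [herglotzKernel, circlePt_neg, h]

lemma poissonP_eq_herglotzKernel (r t : ℝ) :
    (fun s => (poissonP r (t - s) : ℂ)) = (1 / 2 : ℂ) •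
      (herglotzKernel (circlePt r t) + fun s => herglotzKernel (circlePt r (-t)) (-s)) := by
  funext s
  simp only [Pi.smul_apply, Pi.add_apply, ← conj_herglotzKernel, smul_eq_mul]
  rw [poissonP, circlePt_sub, Complex.re_eq_add_conj, ← herglotzKernel]
  ring

lemma poissonQ_eq_herglotzKernel (r t : ℝ) :
    (fun s => (poissonQ r (t - s) : ℂ)) = (1 / (2 * Complex.I) : ℂ) •
      (herglotzKernel (circlePt r t) + (-1 : ℂ) •
        fun s => herglotzKernel (circlePt r (-t)) (-s)) := by
  funext s
  simp only [Pi.smul_apply, Pi.add_apply, ← conj_herglotzKernel, smul_eq_mul]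
  rw [poissonQ, circlePt_sub, Complex.im_eq_sub_conj, ← herglotzKernel]
  ring

lemma IsPeriodicDistributionC.pConvC_eq (hu : IsPeriodicDistributionC u) (hpar : HasParity ε u)
    {r : ℝ} (hr : 0 ≤ r) (hr1 : r < 1) (t : ℝ) :
    pConvC u r t =
      (1 / 2 : ℂ) • (herglotz u (circlePt r t) + ε • herglotz u (circlePt r (-t))) := by
  have hsmooth (t : ℝ) : Smooth1PeriodicC (herglotzKernel (circlePt r t)) :=
    smooth_herglotzKernel (by rwa [norm_circlePt hr])
  rw [pConvC, poissonP_eq_herglotzKernel,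
    hu.2.1 _ _ (testSpace.add_mem (hsmooth t) (hsmooth (-t)).comp_neg),
    hu.1 _ _ (hsmooth t) (hsmooth (-t)).comp_neg, hpar _ (hsmooth (-t)), herglotz, herglotz]

lemma IsPeriodicDistributionC.qConvC_eq (hu : IsPeriodicDistributionC u) (hpar : HasParity ε u)
    {r : ℝ} (hr : 0 ≤ r) (hr1 : r < 1) (t : ℝ) :
    qConvC u r t = (1 / (2 * Complex.I) : ℂ) •
      (herglotz u (circlePt r t) - ε • herglotz u (circlePt r (-t))) := by
  have hsmooth (t : ℝ) : Smooth1PeriodicC (herglotzKernel (circlePt r t)) :=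
    smooth_herglotzKernel (by rwa [norm_circlePt hr])
  have hsmooth_neg := testSpace.smul_mem (-1 : ℂ) (hsmooth (-t)).comp_neg
  rw [qConvC, poissonQ_eq_herglotzKernel, hu.2.1 _ _ (testSpace.add_mem (hsmooth t) hsmooth_neg),
    hu.1 _ _ (hsmooth t) hsmooth_neg, hu.2.1 _ _ (hsmooth (-t)).comp_neg, hpar _ (hsmooth (-t)),
    neg_one_smul, ← sub_eq_add_neg, herglotz, herglotz]

lemma IsPeriodicDistributionC.herglotz_eq (hu : IsPeriodicDistributionC u)
    (hpar : HasParity ε u) {r : ℝ} (hr : 0 ≤ r) (hr1 : r < 1) (t : ℝ) :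
    herglotz u (circlePt r t) = pConvC u r t + Complex.I • qConvC u r t := by
  rw [hu.pConvC_eq hpar hr hr1, hu.qConvC_eq hpar hr hr1, smul_smul,
    show Complex.I * (1 / (2 * Complex.I)) = 1 / 2 by field_simp]
  module

lemma norm_smul_add_smul_le_max {c ε : ℂ} (hc : ‖c‖ = 1 / 2) (hε : ‖ε‖ = 1) (x y : Y) :
    ‖c • (x + ε • y)‖ ≤ max ‖x‖ ‖y‖ := by
  have h : ‖x + ε • y‖ ≤ ‖x‖ + ‖y‖ := by simpa [norm_smul, hε] using norm_add_le x (ε • y)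
  rw [norm_smul, hc]
  linarith [le_max_left ‖x‖ ‖y‖, le_max_right ‖x‖ ‖y‖]

lemma IsPeriodicDistributionC.norm_pConvC_le (hu : IsPeriodicDistributionC u)
    (hpar : HasParity ε u) (hε : ‖ε‖ = 1) {r : ℝ} (hr : 0 ≤ r) (hr1 : r < 1) (t : ℝ) :
    ‖pConvC u r t‖ ≤ max ‖herglotz u (circlePt r t)‖ ‖herglotz u (circlePt r (-t))‖ := by
  rw [hu.pConvC_eq hpar hr hr1]
  exact norm_smul_add_smul_le_max (by simp) hε _ _

lemma IsPeriodicDistributionC.norm_qConvC_le (hu : IsPeriodicDistributionC u)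
    (hpar : HasParity ε u) (hε : ‖ε‖ = 1) {r : ℝ} (hr : 0 ≤ r) (hr1 : r < 1) (t : ℝ) :
    ‖qConvC u r t‖ ≤ max ‖herglotz u (circlePt r t)‖ ‖herglotz u (circlePt r (-t))‖ := by
  rw [hu.qConvC_eq hpar hr hr1, sub_eq_add_neg, ← neg_smul]
  exact norm_smul_add_smul_le_max (by simp) (by rwa [norm_neg]) _ _

end Herglotz

/-! ### Power series and boundary values -/

namespace HasPolyGrowth

lemma of_norm_le {Y : Type*} [Norm Y] {a : ℕ → Y} {C : ℝ} (h : ∀ n, ‖a n‖ ≤ C) :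
    HasPolyGrowth a :=
  ⟨0, C, fun n => by simpa using h n⟩

variable {Y : Type*} [NormedAddCommGroup Y] {a b : ℕ → Y}

lemma add (ha : HasPolyGrowth a) (hb : HasPolyGrowth b) : HasPolyGrowth (a + b) := by
  obtain ⟨k, C, hC⟩ := ha
  obtain ⟨l, D, hD⟩ := hb
  have hC0 : 0 ≤ C := by simpa using (norm_nonneg _).trans (hC 0)
  have hD0 : 0 ≤ D := by simpa using (norm_nonneg _).trans (hD 0)
  refine ⟨max k l, C + D, fun n => ?_⟩
  have hn : 1 ≤ (n : ℝ) + 1 := by simp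
  calc ‖a n + b n‖ ≤ C * ((n : ℝ) + 1) ^ k + D * ((n : ℝ) + 1) ^ l :=
        norm_add_le_of_le (hC n) (hD n)
    _ ≤ C * ((n : ℝ) + 1) ^ max k l + D * ((n : ℝ) + 1) ^ max k l := by
        gcongr
        exacts [le_max_left k l, le_max_right k l]
    _ = (C + D) * ((n : ℝ) + 1) ^ max k l := by ring

lemma const_smul [NormedSpace ℂ Y] (ha : HasPolyGrowth a) (c : ℂ) : HasPolyGrowth (c • a) := by
  obtain ⟨k, C, hC⟩ := ha
  refine ⟨k, ‖c‖ * C, fun n => ?_⟩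
  rw [Pi.smul_apply, norm_smul, mul_assoc]
  gcongr
  exact hC n

end HasPolyGrowth

section PowerSeries

variable {Y : Type*} [NormedAddCommGroup Y] [NormedSpace ℂ Y]

/-- The coefficient of `z ^ n` in the Taylor expansion of `F` at the origin. -/
def taylorCoeff (F : ℂ → Y) (n : ℕ) : Y := (n.factorial : ℂ)⁻¹ • iteratedDeriv n F 0

variable {F G : ℂ → Y}

lemma taylorCoeff_zero (F : ℂ → Y) : taylorCoeff F 0 = F 0 := by simp [taylorCoeff]

lemma contDiffAt_zero_of_differentiableOn [CompleteSpace Y]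
    (hF : DifferentiableOn ℂ F (Metric.ball 0 1)) (n : ℕ) : ContDiffAt ℂ n F 0 :=
  (hF.analyticAt (Metric.ball_mem_nhds 0 one_pos)).contDiffAt

lemma taylorCoeff_add [CompleteSpace Y] (hF : DifferentiableOn ℂ F (Metric.ball 0 1))
    (hG : DifferentiableOn ℂ G (Metric.ball 0 1)) (n : ℕ) :
    taylorCoeff (F + G) n = taylorCoeff F n + taylorCoeff G n := by
  rw [taylorCoeff, iteratedDeriv_add (contDiffAt_zero_of_differentiableOn hF n)
    (contDiffAt_zero_of_differentiableOn hG n), smul_add, taylorCoeff, taylorCoeff]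

lemma taylorCoeff_smul [CompleteSpace Y] (c : ℂ) (hF : DifferentiableOn ℂ F (Metric.ball 0 1))
    (n : ℕ) : taylorCoeff (c • F) n = c • taylorCoeff F n := by
  rw [taylorCoeff, iteratedDeriv_const_smul (contDiffAt_zero_of_differentiableOn hF n),
    smul_comm, taylorCoeff]

lemma hasSum_taylorCoeff [CompleteSpace Y] (hF : DifferentiableOn ℂ F (Metric.ball 0 1)) {z : ℂ}
    (hz : ‖z‖ < 1) : HasSum (fun n => z ^ n • taylorCoeff F n) (F z) := by
  have h := Complex.hasSum_taylorSeries_on_ball hF (z := z) (by simpa using hz)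
  exact h.congr_fun fun n => by rw [taylorCoeff, sub_zero, smul_comm]

lemma hasFPowerSeriesOnBall_of_hasSum {a : ℕ → Y}
    (h : ∀ z : ℂ, ‖z‖ < 1 → HasSum (fun n => z ^ n • a n) (F z)) :
    HasFPowerSeriesOnBall F (fun n => ContinuousMultilinearMap.mkPiRing ℂ (Fin n) (a n)) 0 1 := by
  refine ⟨?_, one_pos, fun {z} hz => ?_⟩
  · refine ENNReal.le_of_forall_nnreal_lt fun r hr => ?_
    have hr1 : ‖(r : ℂ)‖ < 1 := by simpa using hr
    refine FormalMultilinearSeries.le_radius_of_tendsto _ (l := 0) ?_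
    simpa [norm_smul, mul_comm] using (h r hr1).summable.tendsto_atTop_zero.norm
  · have hz1 : ‖z‖ < 1 := by
      rwa [mem_eball_zero_iff, ← ofReal_norm, ENNReal.ofReal_lt_one] at hz
    simpa using h z hz1

lemma differentiableOn_of_hasSum [CompleteSpace Y] {a : ℕ → Y}
    (h : ∀ z : ℂ, ‖z‖ < 1 → HasSum (fun n => z ^ n • a n) (F z)) :
    DifferentiableOn ℂ F (Metric.ball 0 1) := by
  rw [← Metric.eball_ofReal, ENNReal.ofReal_one]
  exact (hasFPowerSeriesOnBall_of_hasSum h).differentiableOn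

lemma taylorCoeff_eq_of_hasSum [CompleteSpace Y] {a : ℕ → Y}
    (h : ∀ z : ℂ, ‖z‖ < 1 → HasSum (fun n => z ^ n • a n) (F z)) : taylorCoeff F = a := by
  funext n
  have hfact : (n.factorial : ℂ) ≠ 0 := mod_cast n.factorial_ne_zero
  rw [taylorCoeff, iteratedDeriv, ← (hasFPowerSeriesOnBall_of_hasSum h).factorial_smul 1 n,
    ← Nat.cast_smul_eq_nsmul ℂ, inv_smul_smul₀ hfact]
  simp

lemma hasSum_pow_smul_single (n : ℕ) (x : Y) (z : ℂ) :
    HasSum (fun m => z ^ m • Pi.single (M := fun _ => Y) n x m) (z ^ n • x) := by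
  simpa using hasSum_single (f := fun m => z ^ m • Pi.single (M := fun _ => Y) n x m) n
    fun m hm => by simp [hm]

variable (Y) in
/-- The analytic functions on the disc whose Taylor coefficients grow at most polynomially; these
are the ones with a distributional boundary value. -/
def moderateSpace [CompleteSpace Y] : Submodule ℂ (ℂ → Y) where
  carrier := {F | DifferentiableOn ℂ F (Metric.ball 0 1) ∧ HasPolyGrowth (taylorCoeff F)}
  zero_mem' := by
    have h : taylorCoeff (0 : ℂ → Y) = 0 :=
      taylorCoeff_eq_of_hasSum fun z _ => by simp [hasSum_zero]
    exact ⟨differentiableOn_const 0, h ▸ .of_norm_le (C := 0) (by simp)⟩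
  add_mem' {F G} hF hG := by
    have h : taylorCoeff (F + G) = taylorCoeff F + taylorCoeff G :=
      funext (taylorCoeff_add hF.1 hG.1)
    exact ⟨hF.1.add hG.1, h ▸ hF.2.add hG.2⟩
  smul_mem' c F hF := by
    have h : taylorCoeff (c • F) = c • taylorCoeff F := funext (taylorCoeff_smul c hF.1)
    exact ⟨hF.1.const_smul c, h ▸ hF.2.const_smul c⟩

variable [CompleteSpace Y]

lemma mem_moderateSpace_of_hasSum {a : ℕ → Y} (ha : HasPolyGrowth a)
    (h : ∀ z : ℂ, ‖z‖ < 1 → HasSum (fun n => z ^ n • a n) (F z)) : F ∈ moderateSpace Y :=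
  ⟨differentiableOn_of_hasSum h, by rwa [taylorCoeff_eq_of_hasSum h]⟩

lemma taylorCoeff_pow_smul (n : ℕ) (x : Y) : taylorCoeff (fun z => z ^ n • x) = Pi.single n x :=
  taylorCoeff_eq_of_hasSum fun z _ => hasSum_pow_smul_single n x z

lemma pow_smul_mem_moderateSpace (n : ℕ) (x : Y) : (fun z => z ^ n • x) ∈ moderateSpace Y := by
  refine mem_moderateSpace_of_hasSum (.of_norm_le (C := ‖x‖) fun m => ?_)
    fun z _ => hasSum_pow_smul_single n x z
  by_cases hm : m = n
  · simp [hm]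
  · simp [hm]

variable (Y) in
lemma exists_boundaryValue : ∃ B : (ℂ → Y) →ₗ[ℂ] ((ℝ → ℂ) → Y), ∀ F ∈ moderateSpace Y,
    ∀ g, Smooth1PeriodicC g → HasSum (fun n : ℕ => testCoeff g (-n) • taylorCoeff F n) (B F g) := by
  let B₀ : moderateSpace Y →ₗ[ℂ] ((ℝ → ℂ) → Y) :=
    { toFun F := Set.indicator {g | Smooth1PeriodicC g}
        fun g => ∑' n : ℕ, testCoeff g (-n) • taylorCoeff F n
      map_add' F G := by
        rw [← Set.indicator_add']
        refine Set.indicator_congr fun g hg => ?_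
        simp only [Submodule.coe_add, taylorCoeff_add F.2.1 G.2.1, smul_add, Pi.add_apply]
        exact (F.2.2.summable_testCoeff_smul hg).tsum_add (G.2.2.summable_testCoeff_smul hg)
      map_smul' c F := by
        refine Eq.trans ?_ (Set.indicator_const_smul {g | Smooth1PeriodicC g} c _)
        refine Set.indicator_congr fun g hg => ?_
        simp only [Submodule.coe_smul, taylorCoeff_smul c F.2.1, smul_comm _ c]
        exact (F.2.2.summable_testCoeff_smul hg).tsum_const_smul c }
  obtain ⟨B, hB⟩ := B₀.exists_extend
  refine ⟨B, fun F hF g hg => ?_⟩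
  have hBF : B F g = ∑' n : ℕ, testCoeff g (-n) • taylorCoeff F n := by
    have hBF₀ : B F = Set.indicator {g | Smooth1PeriodicC g}
        fun g => ∑' n : ℕ, testCoeff g (-n) • taylorCoeff F n := LinearMap.congr_fun hB ⟨F, hF⟩
    rw [hBF₀, Set.indicator_of_mem (s := {g | Smooth1PeriodicC g}) hg]
  exact hBF ▸ (hF.2.summable_testCoeff_smul hg).hasSum

variable (Y) in
/-- The boundary value `F ↦ ∑ₙ aₙ e_n` of an analytic function `F(z) = ∑ₙ aₙ zⁿ` of moderate growth,
extended linearly to all functions so that it can serve as a map on the ambient space. -/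
def boundaryValue : (ℂ → Y) →ₗ[ℂ] ((ℝ → ℂ) → Y) := (exists_boundaryValue Y).choose

lemma hasSum_boundaryValue (hF : F ∈ moderateSpace Y) {g : ℝ → ℂ} (hg : Smooth1PeriodicC g) :
    HasSum (fun n : ℕ => testCoeff g (-n) • taylorCoeff F n) (boundaryValue Y F g) :=
  (exists_boundaryValue Y).choose_spec F hF g hg

lemma isPeriodicDistributionC_boundaryValue (hF : F ∈ moderateSpace Y) :
    IsPeriodicDistributionC (boundaryValue Y F) :=
  hF.2.isPeriodicDistributionC fun _ hg => hasSum_boundaryValue hF hg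

lemma boundaryValue_pow_smul (n : ℕ) (x : Y) {g : ℝ → ℂ} (hg : Smooth1PeriodicC g) :
    boundaryValue Y (fun z => z ^ n • x) g = testCoeff g (-n) • x := by
  have h := hasSum_boundaryValue (pow_smul_mem_moderateSpace n x) hg
  rw [taylorCoeff_pow_smul] at h
  refine h.unique ?_
  simpa using hasSum_single (f := fun m : ℕ => testCoeff g (-m) • Pi.single (M := fun _ => Y) n x m)
    n fun m hm => by simp [hm]

lemma boundaryValue_expMonomial_neg (hF : F ∈ moderateSpace Y) (m : ℕ) :
    boundaryValue Y F (expMonomial (-m)) = taylorCoeff F m := by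
  refine (hasSum_boundaryValue hF (smooth_expMonomial (-m))).unique ?_
  simpa [testCoeff_expMonomial] using
    hasSum_single (f := fun n : ℕ => testCoeff (expMonomial (-m)) (-n) • taylorCoeff F n) m
      fun n hn => by simp [testCoeff_expMonomial, hn.symm]

lemma boundaryValue_expMonomial_eq_zero (hF : F ∈ moderateSpace Y) {n : ℤ} (hn : 0 < n) :
    boundaryValue Y F (expMonomial n) = 0 := by
  refine (hasSum_boundaryValue hF (smooth_expMonomial n)).unique ?_
  have hterm (m : ℕ) : testCoeff (expMonomial n) (-m) • taylorCoeff F m = 0 := by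
    rw [testCoeff_expMonomial, if_neg (by lia), zero_smul]
  simpa only [hterm] using hasSum_zero

end PowerSeries

/-! ### Growth of functions in Hardy spaces -/

lemma circleAverage_eq_setIntegral_I₀ {E : Type*} [NormedAddCommGroup E] [NormedSpace ℝ E]
    (f : ℂ → E) (ρ : ℝ) : Real.circleAverage f 0 ρ = ∫ t in I₀, f (circlePt ρ t) := by
  have hmap (t : ℝ) : circleMap 0 ρ (2 * Real.pi * t) = circlePt ρ t := by
    rw [circleMap, circlePt]
    push_cast
    ring
  have hsubst := intervalIntegral.smul_integral_comp_mul_add (a := -(1 : ℝ) / 2) (b := 1 / 2)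
    (fun θ => f (circleMap 0 ρ (θ + -Real.pi))) (2 * Real.pi) Real.pi
  simp only [add_neg_cancel_right, hmap] at hsubst
  rw [Real.circleAverage_eq_integral_add (-Real.pi), setIntegral_I₀,
    ← inv_smul_smul₀ Real.two_pi_pos.ne' (∫ t in (-(1 : ℝ) / 2)..(1 / 2), f (circlePt ρ t)), hsubst]
  ring_nf

lemma le_two_rpow_mul_of_rpow_mul_half_le {p a M d : ℝ} (hp : 0 < p) (ha : 0 ≤ a) (hM : 0 ≤ M)
    (hd : 0 < d) (h : a ^ p * (d / 2) ≤ M ^ p * d) : a ≤ 2 ^ (1 / p) * M := by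
  rw [← Real.rpow_le_rpow_iff ha (by positivity) hp, Real.mul_rpow (by positivity) hM,
    ← Real.rpow_mul two_pos.le, one_div_mul_cancel hp.ne', Real.rpow_one]
  exact le_of_mul_le_mul_right (by linarith) (half_pos hd)

lemma rpow_mul_le_of_le_mul_rpow_one_sub {p M d B : ℝ} (hp : 0 < p) (hM : 0 < M) (hd : 0 < d)
    (h : M ≤ (d / 2)⁻¹ * ((2 ^ (1 / p) * M) ^ (1 - p) * B)) : M ^ p * d ≤ 2 ^ (1 / p) * B := by
  have htwo : 2 * ((2 : ℝ) ^ (1 / p)) ^ (1 - p) = 2 ^ (1 / p) := by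
    rw [← Real.rpow_mul two_pos.le]
    nth_rewrite 1 [← Real.rpow_one 2]
    rw [← Real.rpow_add two_pos]
    congr 1
    field_simp
    ring
  refine le_of_mul_le_mul_right ?_ (Real.rpow_pos_of_pos hM (1 - p))
  calc M ^ p * d * M ^ (1 - p) = d * (M ^ p * M ^ (1 - p)) := by ring
    _ = d * M := by rw [← Real.rpow_add hM, add_sub_cancel, Real.rpow_one]
    _ ≤ d * ((d / 2)⁻¹ * ((2 ^ (1 / p) * M) ^ (1 - p) * B)) := by gcongr
    _ = 2 * (2 ^ (1 / p)) ^ (1 - p) * B * M ^ (1 - p) := by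
        rw [Real.mul_rpow (by positivity) hM.le]
        field_simp
    _ = 2 ^ (1 / p) * B * M ^ (1 - p) := by rw [htwo]

lemma one_div_add_one_le_one_sub_pow (n : ℕ) :
    1 / ((n : ℝ) + 1) ≤ (1 - 1 / ((n : ℝ) + 2)) ^ n := by
  have hn : 1 / ((n : ℝ) + 2) ≤ 1 := div_le_one_of_le₀ (by linarith) (by positivity)
  calc 1 / ((n : ℝ) + 1) ≤ 2 / ((n : ℝ) + 2) := by
        rw [div_le_div_iff₀ (by positivity) (by positivity)]
        linarith
    _ = 1 + n * -(1 / ((n : ℝ) + 2)) := by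
        field_simp
        ring
    _ ≤ (1 - 1 / ((n : ℝ) + 2)) ^ n := one_add_mul_le_pow (by linarith) n

section Growth

variable {Y : Type*} [NormedAddCommGroup Y] {F : ℂ → Y}

lemma continuous_comp_circlePt (hF : ContinuousOn F (Metric.ball 0 1)) {r : ℝ} (hr : 0 ≤ r)
    (hr1 : r < 1) : Continuous fun t => F (circlePt r t) :=
  hF.comp_continuous (continuous_circlePt r) fun t => by
    rwa [mem_ball_zero_iff, norm_circlePt hr]

lemma toReal_hpIntegral (hF : ContinuousOn F (Metric.ball 0 1)) {p r : ℝ} (hp : 0 < p)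
    (hr : 0 ≤ r) (hr1 : r < 1) :
    (hpIntegral p F r).toReal = ∫ t in I₀, ‖F (circlePt r t)‖ ^ p := by
  have hcont := (continuous_comp_circlePt hF hr hr1).norm.rpow_const fun _ => .inr hp.le
  rw [integral_eq_lintegral_of_nonneg_ae (Eventually.of_forall fun t => by positivity)
    hcont.aestronglyMeasurable]
  simp only [hpIntegral, ← ENNReal.ofReal_rpow_of_nonneg (norm_nonneg _) hp.le, ofReal_norm]
  rfl

lemma hpIntegral_le_one_add {p q : ℝ} (hq : 0 ≤ q) (hqp : q ≤ p) (F : ℂ → Y) (r : ℝ) :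
    hpIntegral q F r ≤ 1 + hpIntegral p F r := by
  have hpow (a : ℝ≥0∞) : a ^ q ≤ 1 + a ^ p := by
    rcases le_total a 1 with ha | ha
    · exact (ENNReal.rpow_le_one ha hq).trans le_self_add
    · exact (ENNReal.rpow_le_rpow_of_exponent_le ha hqp).trans le_add_self
  refine (lintegral_mono fun t => hpow _).trans_eq ?_
  rw [lintegral_add_left measurable_const, setLIntegral_one, volume_I₀, hpIntegral]

lemma setIntegral_norm_le_rpow_mul {p A : ℝ} (hp : 0 < p) (hp1 : p ≤ 1)
    (hF : ContinuousOn F (Metric.ball 0 1)) {r : ℝ} (hr : 0 ≤ r) (hr1 : r < 1)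
    (hA : ∀ t, ‖F (circlePt r t)‖ ≤ A) :
    ∫ t in I₀, ‖F (circlePt r t)‖ ≤ A ^ (1 - p) * ∫ t in I₀, ‖F (circlePt r t)‖ ^ p := by
  have hcont := continuous_comp_circlePt hF hr hr1
  have hcont_rpow := hcont.norm.rpow_const (p := p) fun _ => .inr hp.le
  rw [← integral_const_mul]
  refine integral_mono (integrableOn_I₀ hcont.norm)
    (integrableOn_I₀ (continuous_const.mul hcont_rpow)) fun t => ?_
  calc ‖F (circlePt r t)‖ = ‖F (circlePt r t)‖ ^ (1 - p) * ‖F (circlePt r t)‖ ^ p := by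
        rw [← Real.rpow_add_of_nonneg (norm_nonneg _) (sub_nonneg.2 hp1) hp.le, sub_add_cancel,
          Real.rpow_one]
    _ ≤ A ^ (1 - p) * ‖F (circlePt r t)‖ ^ p := by
        gcongr
        exact hA t

variable [NormedSpace ℂ Y] [CompleteSpace Y]

lemma norm_le_setIntegral_circlePt (hF : DifferentiableOn ℂ F (Metric.ball 0 1)) {ρ : ℝ}
    (hρ1 : ρ < 1) {w : ℂ} (hw : ‖w‖ < ρ) :
    ‖F w‖ ≤ (ρ - ‖w‖)⁻¹ * ∫ t in I₀, ‖F (circlePt ρ t)‖ := by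
  have hρ : 0 < ρ := (norm_nonneg w).trans_lt hw
  have hcauchy : Real.circleAverage (fun z => ((z - 0) / (z - w)) • F z) 0 ρ = F w := by
    refine DiffContOnCl.circleAverage_smul_div ?_ ?_
    · exact hF.diffContOnCl_ball (by rw [abs_of_pos hρ]; exact Metric.closedBall_subset_ball hρ1)
    · rwa [abs_of_pos hρ, mem_ball_zero_iff]
  have hcont := continuous_comp_circlePt hF.continuousOn hρ.le hρ1
  rw [← hcauchy, circleAverage_eq_setIntegral_I₀, ← integral_const_mul]
  refine norm_integral_le_of_norm_le (integrableOn_I₀ (continuous_const.mul hcont.norm))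
    (Eventually.of_forall fun t => ?_)
  have hdist : ρ - ‖w‖ ≤ ‖circlePt ρ t - w‖ := by
    simpa only [norm_circlePt hρ.le] using norm_sub_norm_le (circlePt ρ t) w
  have hfactor : ρ / ‖circlePt ρ t - w‖ ≤ (ρ - ‖w‖)⁻¹ := by
    rw [← one_div]
    have := sub_pos.2 hw
    gcongr
  rw [norm_smul, norm_div, sub_zero, norm_circlePt hρ.le]
  gcongr

/-- The mean value inequality for `‖F‖ ^ p` despite `p < 1`: at a point where
`‖F z‖ ^ p (R - ‖z‖)` is maximal, `‖F‖ ^ p` at most doubles on a circle halfway to the boundary,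
so there `‖F‖ ^ (1 - p)` can be pulled out of Cauchy's integral. -/
lemma norm_rpow_mul_le_of_isMaxOn (hF : DifferentiableOn ℂ F (Metric.ball 0 1)) {p : ℝ}
    (hp : 0 < p) (hp1 : p ≤ 1) {B : ℝ}
    (hB : ∀ r, 0 ≤ r → r < 1 → ∫ t in I₀, ‖F (circlePt r t)‖ ^ p ≤ B) {R : ℝ} (hR1 : R < 1) {z : ℂ}
    (hz : ‖z‖ ≤ R)
    (hmax : IsMaxOn (fun w => ‖F w‖ ^ p * (R - ‖w‖)) (Metric.closedBall 0 R) z) :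
    ‖F z‖ ^ p * (R - ‖z‖) ≤ 2 ^ (1 / p) * B := by
  have hB0 : 0 ≤ B := (integral_nonneg fun t => by positivity).trans (hB 0 le_rfl one_pos)
  set M := ‖F z‖
  set d := R - ‖z‖ with hd
  rcases (norm_nonneg (F z)).eq_or_lt with hM | hM
  · rw [show M = 0 from hM.symm, Real.zero_rpow hp.ne', zero_mul]
    positivity
  rcases (sub_nonneg.2 hz).eq_or_lt with hd0 | hd0
  · rw [show d = 0 from hd0.symm, mul_zero]
    positivity
  have hz0 := norm_nonneg z
  have hρ0 : 0 ≤ R - d / 2 := by linarith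
  have hρ1 : R - d / 2 < 1 := by linarith
  have hcircle (t : ℝ) : ‖F (circlePt (R - d / 2) t)‖ ≤ 2 ^ (1 / p) * M := by
    have hle := isMaxOn_iff.1 hmax (circlePt (R - d / 2) t) (by
      rw [mem_closedBall_zero_iff, norm_circlePt hρ0]; linarith)
    simp only [norm_circlePt hρ0] at hle
    exact le_two_rpow_mul_of_rpow_mul_half_le hp (norm_nonneg _) hM.le hd0
      (by linarith)
  have hM_le : M ≤ (d / 2)⁻¹ * ((2 ^ (1 / p) * M) ^ (1 - p) * B) :=
    calc M ≤ (R - d / 2 - ‖z‖)⁻¹ * ∫ t in I₀, ‖F (circlePt (R - d / 2) t)‖ :=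
          norm_le_setIntegral_circlePt hF hρ1 (by linarith)
      _ ≤ (d / 2)⁻¹ * ((2 ^ (1 / p) * M) ^ (1 - p) * B) := by
          rw [show R - d / 2 - ‖z‖ = d / 2 by rw [hd]; ring]
          gcongr
          refine (setIntegral_norm_le_rpow_mul hp hp1 hF.continuousOn hρ0 hρ1 hcircle).trans ?_
          gcongr
          exact hB _ hρ0 hρ1
  exact rpow_mul_le_of_le_mul_rpow_one_sub hp hM hd0 hM_le

lemma norm_rpow_mul_one_sub_norm_le (hF : DifferentiableOn ℂ F (Metric.ball 0 1)) {p : ℝ}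
    (hp : 0 < p) (hp1 : p ≤ 1) {B : ℝ}
    (hB : ∀ r, 0 ≤ r → r < 1 → ∫ t in I₀, ‖F (circlePt r t)‖ ^ p ≤ B) {z : ℂ} (hz : ‖z‖ < 1) :
    ‖F z‖ ^ p * (1 - ‖z‖) ≤ 2 ^ (1 / p) * B := by
  have hR : ∀ᶠ R in 𝓝[<] (1 : ℝ), ‖F z‖ ^ p * (R - ‖z‖) ≤ 2 ^ (1 / p) * B := by
    filter_upwards [Ioo_mem_nhdsLT hz] with R ⟨hzR, hR1⟩
    have hcont : ContinuousOn (fun w => ‖F w‖ ^ p * (R - ‖w‖)) (Metric.closedBall 0 R) :=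
      ((hF.continuousOn.mono (Metric.closedBall_subset_ball hR1)).norm.rpow_const
        fun _ _ => .inr hp.le).mul (by fun_prop)
    obtain ⟨z₀, hz₀, hmax⟩ := (isCompact_closedBall (0 : ℂ) R).exists_isMaxOn
      ⟨z, by simpa using hzR.le⟩ hcont
    exact (isMaxOn_iff.1 hmax z (by simpa using hzR.le)).trans
      (norm_rpow_mul_le_of_isMaxOn hF hp hp1 hB hR1 (by simpa using hz₀) hmax)
  have hlim : Tendsto (fun R => ‖F z‖ ^ p * (R - ‖z‖)) (𝓝[<] (1 : ℝ))
      (𝓝 (‖F z‖ ^ p * (1 - ‖z‖))) :=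
    tendsto_nhdsWithin_of_tendsto_nhds (Continuous.tendsto (by fun_prop) 1)
  exact le_of_tendsto hlim hR

lemma hasPolyGrowth_taylorCoeff (hF : DifferentiableOn ℂ F (Metric.ball 0 1)) {k : ℕ} {K : ℝ}
    (hK : ∀ z, ‖z‖ < 1 → ‖F z‖ * (1 - ‖z‖) ^ k ≤ K) : HasPolyGrowth (taylorCoeff F) := by
  have hK0 : 0 ≤ K := (norm_nonneg (F 0)).trans (by simpa using hK 0 (by simp))
  refine ⟨k + 1, K * 2 ^ k, fun n => ?_⟩
  set ρ : ℝ := 1 - 1 / (n + 2) with hρ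
  have hρ_eq : ρ = (n + 1) / (n + 2) := by rw [hρ]; field_simp; ring
  have hρ0 : 0 < ρ := by rw [hρ_eq]; positivity
  have hρ1 : ρ < 1 := sub_lt_self 1 (by positivity)
  have hsphere (z : ℂ) (hz : z ∈ Metric.sphere 0 ρ) : ‖F z‖ ≤ K * (n + 2) ^ k := by
    have hzρ : ‖z‖ = ρ := by simpa using hz
    have hle := hK z (hzρ.trans_lt hρ1)
    rwa [hzρ, hρ, _root_.sub_sub_cancel, one_div, inv_pow, ← div_eq_mul_inv,
      div_le_iff₀ (by positivity)] at hle
  have hcauchy := Complex.norm_iteratedDeriv_le_of_forall_mem_sphere_norm_le n hρ0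
    (hF.diffContOnCl_ball (Metric.closedBall_subset_ball hρ1)) hsphere
  calc ‖taylorCoeff F n‖ = (n.factorial : ℝ)⁻¹ * ‖iteratedDeriv n F 0‖ := by
        rw [taylorCoeff, norm_smul, norm_inv, Complex.norm_natCast]
    _ ≤ (n.factorial : ℝ)⁻¹ * (n.factorial * (K * (n + 2) ^ k) / ρ ^ n) := by gcongr
    _ = K * (n + 2) ^ k / ρ ^ n := by field_simp
    _ ≤ K * (2 * (n + 1)) ^ k / (1 / (n + 1)) := by
        gcongr
        exacts [by linarith, one_div_add_one_le_one_sub_pow n]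
    _ = K * 2 ^ k * (n + 1) ^ (k + 1) := by
        rw [mul_pow, pow_succ]
        field_simp

lemma memHpD.mem_moderateSpace {p : ℝ} (hp : 0 < p) (hF : memHpD p F) : F ∈ moderateSpace Y := by
  obtain ⟨hdiff, B, hB, hint⟩ := hF
  set q := min p 1
  have hq : 0 < q := lt_min hp one_pos
  have hintq (r : ℝ) (hr : 0 ≤ r) (hr1 : r < 1) :
      ∫ t in I₀, ‖F (circlePt r t)‖ ^ q ≤ (1 + B).toReal := by
    rw [← toReal_hpIntegral hdiff.continuousOn hq hr hr1]
    exact ENNReal.toReal_mono (by simp [hB.ne])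
      ((hpIntegral_le_one_add hq.le (min_le_left p 1) F r).trans (by gcongr; exact hint r hr hr1))
  obtain ⟨k, hk⟩ := exists_nat_ge (1 / q)
  refine ⟨hdiff, hasPolyGrowth_taylorCoeff (k := k) (K := (2 ^ (1 / q) * (1 + B).toReal) ^ (1 / q))
    hdiff fun z hz => ?_⟩
  have hz0 : 0 < 1 - ‖z‖ := sub_pos.2 hz
  calc ‖F z‖ * (1 - ‖z‖) ^ k ≤ ‖F z‖ * (1 - ‖z‖) ^ (1 / q) := by
        gcongr
        rw [← Real.rpow_natCast]
        exact Real.rpow_le_rpow_of_exponent_ge hz0 (by simp) hk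
    _ = (‖F z‖ ^ q * (1 - ‖z‖)) ^ (1 / q) := by
        rw [Real.mul_rpow (by positivity) hz0.le, ← Real.rpow_mul (norm_nonneg _),
          mul_one_div_cancel hq.ne', Real.rpow_one]
    _ ≤ (2 ^ (1 / q) * (1 + B).toReal) ^ (1 / q) := by
        refine Real.rpow_le_rpow (by positivity) ?_ (by positivity)
        exact norm_rpow_mul_one_sub_norm_le hdiff hq (min_le_right p 1) hintq hz

end Growth

/-! ### Hardy norms of the Herglotz transform -/

lemma setLIntegral_I₀_comp_neg (φ : ℝ → ℝ≥0∞) : ∫⁻ t in I₀, φ (-t) = ∫⁻ t in I₀, φ t := by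
  have hneg : MeasurePreserving (fun t : ℝ => -t) := Measure.measurePreserving_neg volume
  have hIco : ∫⁻ t in I₀, φ t = ∫⁻ t in Set.Ioc (-(1 : ℝ) / 2) (1 / 2), φ t :=
    setLIntegral_congr Ico_ae_eq_Ioc
  have hpre : (fun t : ℝ => -t) ⁻¹' Set.Ioc (-(1 : ℝ) / 2) (1 / 2) = I₀ := by
    simp [I₀, neg_div]
  rw [hIco, ← hneg.setLIntegral_comp_preimage_emb (MeasurableEquiv.neg ℝ).measurableEmbedding φ,
    hpre]

lemma rpow_le_add_rpow_of_le_max {p : ℝ} (hp : 0 ≤ p) {a b c : ℝ≥0∞} (h : a ≤ max b c) :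
    a ^ p ≤ b ^ p + c ^ p := by
  rcases le_max_iff.1 h with h | h
  · exact (ENNReal.rpow_le_rpow h hp).trans le_self_add
  · exact (ENNReal.rpow_le_rpow h hp).trans le_add_self

lemma rpow_le_two_rpow_mul_of_le_add {p : ℝ} (hp : 0 ≤ p) {a b c : ℝ≥0∞} (h : a ≤ b + c) :
    a ^ p ≤ 2 ^ p * (b ^ p + c ^ p) := by
  have hmax : a ≤ 2 * max b c := by
    rw [two_mul]
    exact h.trans (add_le_add (le_max_left b c) (le_max_right b c))
  calc a ^ p ≤ 2 ^ p * max b c ^ p := by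
        rw [← ENNReal.mul_rpow_of_nonneg _ _ hp]
        exact ENNReal.rpow_le_rpow hmax hp
    _ ≤ 2 ^ p * (b ^ p + c ^ p) := by
        gcongr
        exact rpow_le_add_rpow_of_le_max hp le_rfl

section Norms

variable {Y : Type*} [NormedAddCommGroup Y] {p : ℝ} {F G : ℂ → Y}

lemma qHpD_congr (h : Set.EqOn F G (Metric.ball 0 1)) : qHpD p F = qHpD p G := by
  refine iSup_congr fun ⟨r, hr, hr1⟩ => ?_
  have hpt (t : ℝ) : F (circlePt r t) = G (circlePt r t) :=
    h (by rw [mem_ball_zero_iff, norm_circlePt hr]; exact hr1)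
  simp only [hpIntegral, hpt]

variable [NormedSpace ℂ Y]

lemma memHpD_iff (hp : 0 < p) :
    memHpD p F ↔ DifferentiableOn ℂ F (Metric.ball 0 1) ∧ qHpD p F < ⊤ := by
  refine and_congr_right fun _ => ⟨fun ⟨B, hB, h⟩ => ?_, fun h => ?_⟩
  · refine (iSup_le fun r : Set.Ico (0 : ℝ) 1 =>
      ENNReal.rpow_le_rpow (h r r.2.1 r.2.2) ?_).trans_lt
      (ENNReal.rpow_lt_top_of_nonneg (y := 1 / p) (by positivity) hB.ne)
    positivity
  · refine ⟨qHpD p F ^ p, ENNReal.rpow_lt_top_of_nonneg hp.le h.ne, fun r hr hr1 => ?_⟩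
    rw [← ENNReal.rpow_inv_le_iff hp, ← one_div]
    exact le_iSup (fun r : Set.Ico (0 : ℝ) 1 => hpIntegral p F r ^ (1 / p)) ⟨r, hr, hr1⟩

variable {u : (ℝ → ℂ) → Y} {ε : ℂ}

lemma qHpT_const_smul {c : ℂ} (hc : ‖c‖ = 1) (p : ℝ) (u : (ℝ → ℂ) → Y) :
    qHpT p (c • u) = qHpT p u := by
  have hc' : ‖c‖₊ = 1 := by ext; exact hc
  simp only [qHpT, pConvC, qConvC, Pi.smul_apply, nnnorm_smul, hc', one_mul]

lemma memHpT.const_smul {c : ℂ} (hu : memHpT p u) (hc : ‖c‖ = 1) :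
    memHpT p (c • u) :=
  ⟨hu.1.const_smul c, (qHpT_const_smul hc p u).symm ▸ hu.2⟩

namespace IsPeriodicDistributionC

lemma qHpD_herglotz_le (hu : IsPeriodicDistributionC u) (hpar : HasParity ε u) (hp : 0 < p) :
    qHpD p (herglotz u) ≤ 2 * qHpT p u := by
  refine iSup_le fun ⟨r, hr, hr1⟩ => ?_
  have hpt (t : ℝ) : (‖herglotz u (circlePt r t)‖₊ : ℝ≥0∞) ≤ ‖pConvC u r t‖₊ + ‖qConvC u r t‖₊ := by
    rw [hu.herglotz_eq hpar hr hr1]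
    refine mod_cast (nnnorm_add_le _ _).trans_eq ?_
    simp [nnnorm_smul]
  have hint : hpIntegral p (herglotz u) r ≤ 2 ^ p *
      ∫⁻ t in I₀, ((‖pConvC u r t‖₊ : ℝ≥0∞) ^ p + (‖qConvC u r t‖₊ : ℝ≥0∞) ^ p) := by
    rw [← lintegral_const_mul' _ _ (ENNReal.rpow_ne_top_of_nonneg hp.le ofNat_ne_top)]
    exact lintegral_mono fun t => rpow_le_two_rpow_mul_of_le_add hp.le (hpt t)
  refine (ENNReal.rpow_le_rpow hint (by positivity)).trans ?_
  rw [ENNReal.mul_rpow_of_nonneg _ _ (by positivity), ← ENNReal.rpow_mul,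
    mul_one_div_cancel hp.ne', ENNReal.rpow_one]
  gcongr
  exact le_iSup (fun r : Set.Ico (0 : ℝ) 1 => (∫⁻ t in I₀, ((‖pConvC u r t‖₊ : ℝ≥0∞) ^ p +
    (‖qConvC u r t‖₊ : ℝ≥0∞) ^ p)) ^ (1 / p)) ⟨r, hr, hr1⟩

lemma hasPolyGrowth_herglotzCoeff (hu : IsPeriodicDistributionC u) :
    HasPolyGrowth fun m : ℕ => herglotzCoeff m • u (expMonomial (-m)) := by
  obtain ⟨k, C, hC⟩ := hu.hasPolyGrowth
  refine ⟨k, 2 * C, fun m => ?_⟩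
  rw [norm_smul, mul_assoc]
  exact mul_le_mul (norm_herglotzCoeff_le m) (hC m) (norm_nonneg _) zero_le_two

variable [CompleteSpace Y]

lemma herglotz_mem_moderateSpace (hu : IsPeriodicDistributionC u) :
    herglotz u ∈ moderateSpace Y :=
  mem_moderateSpace_of_hasSum hu.hasPolyGrowth_herglotzCoeff fun _ hz => hu.hasSum_herglotz hz

lemma taylorCoeff_herglotz (hu : IsPeriodicDistributionC u) (m : ℕ) :
    taylorCoeff (herglotz u) m = herglotzCoeff m • u (expMonomial (-m)) :=
  congrFun (taylorCoeff_eq_of_hasSum fun _ hz => hu.hasSum_herglotz hz) m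

lemma qHpT_le (hu : IsPeriodicDistributionC u) (hpar : HasParity ε u) (hε : ‖ε‖ = 1)
    (hp : 0 < p) : qHpT p u ≤ 4 ^ (1 / p) * qHpD p (herglotz u) := by
  refine iSup_le fun ⟨r, hr, hr1⟩ => ?_
  set φ : ℝ → ℝ≥0∞ := fun t => (‖herglotz u (circlePt r t)‖₊ : ℝ≥0∞) ^ p
  have hφ : Measurable φ := by
    have := continuous_comp_circlePt hu.herglotz_mem_moderateSpace.1.continuousOn hr hr1
    fun_prop
  have hP (t : ℝ) : (‖pConvC u r t‖₊ : ℝ≥0∞) ^ p ≤ φ t + φ (-t) :=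
    rpow_le_add_rpow_of_le_max hp.le (mod_cast hu.norm_pConvC_le hpar hε hr hr1 t)
  have hQ (t : ℝ) : (‖qConvC u r t‖₊ : ℝ≥0∞) ^ p ≤ φ t + φ (-t) :=
    rpow_le_add_rpow_of_le_max hp.le (mod_cast hu.norm_qConvC_le hpar hε hr hr1 t)
  have hint : ∫⁻ t in I₀, ((‖pConvC u r t‖₊ : ℝ≥0∞) ^ p + (‖qConvC u r t‖₊ : ℝ≥0∞) ^ p) ≤
      4 * hpIntegral p (herglotz u) r :=
    calc _ ≤ ∫⁻ t in I₀, 2 * (φ t + φ (-t)) :=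
          lintegral_mono fun t => (add_le_add (hP t) (hQ t)).trans_eq (two_mul _).symm
      _ = 2 * ((∫⁻ t in I₀, φ t) + ∫⁻ t in I₀, φ t) := by
          rw [lintegral_const_mul' _ _ ofNat_ne_top, lintegral_add_left hφ,
            setLIntegral_I₀_comp_neg]
      _ = 4 * hpIntegral p (herglotz u) r := by
          rw [← two_mul, ← mul_assoc, hpIntegral]
          norm_num [φ]
  refine (ENNReal.rpow_le_rpow hint (by positivity)).trans ?_
  rw [ENNReal.mul_rpow_of_nonneg _ _ (by positivity)]
  gcongr
  exact le_iSup (fun r : Set.Ico (0 : ℝ) 1 => hpIntegral p (herglotz u) r ^ (1 / p)) ⟨r, hr, hr1⟩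

end IsPeriodicDistributionC

end Norms

/-! ### The cosine and sine transforms -/

section TrigTransform

variable {Y : Type*} [NormedAddCommGroup Y] [NormedSpace ℂ Y] [CompleteSpace Y]
  {F : ℂ → Y} {u : (ℝ → ℂ) → Y} {ε c : ℂ} {p : ℝ}

/-- The part of parity `ε` of the boundary value. It maps `x zⁿ` to `x (e_n + ε e_{-n}) / 2`, which
is `x cos (2πnt)` for `ε = 1` and `i x sin (2πnt)` for `ε = -1`. -/
def trigTransform (ε : ℂ) : (ℂ → Y) →ₗ[ℂ] ((ℝ → ℂ) → Y) := parityPart ε ∘ₗ boundaryValue Y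

lemma trigTransform_pow_smul (ε : ℂ) (n : ℕ) (x : Y) {g : ℝ → ℂ} (hg : Smooth1PeriodicC g) :
    trigTransform ε (fun z => z ^ n • x) g =
      ((1 / 2 : ℂ) * (testCoeff g (-n) + ε * testCoeff g n)) • x := by
  rw [trigTransform, LinearMap.comp_apply, parityPart_apply, boundaryValue_pow_smul n x hg,
    boundaryValue_pow_smul n x hg.comp_neg, testCoeff_comp_neg, neg_neg]
  module

lemma isPeriodicDistributionC_trigTransform (hF : F ∈ moderateSpace Y) (ε : ℂ) :
    IsPeriodicDistributionC (trigTransform ε F) :=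
  (isPeriodicDistributionC_boundaryValue hF).parityPart ε

lemma hasParity_trigTransform (hε : ε ^ 2 = 1) (F : ℂ → Y) : HasParity ε (trigTransform ε F) :=
  hasParity_parityPart hε _

lemma trigTransform_expMonomial_zero (hF : F ∈ moderateSpace Y) (h0 : F 0 = ε • F 0) :
    trigTransform ε F (expMonomial 0) = F 0 := by
  have h := boundaryValue_expMonomial_neg hF 0
  rw [Nat.cast_zero, neg_zero, taylorCoeff_zero] at h
  rw [trigTransform, LinearMap.comp_apply, parityPart_expMonomial, neg_zero, h, ← h0]
  module

lemma trigTransform_expMonomial_neg (hF : F ∈ moderateSpace Y) (ε : ℂ) {m : ℕ} (hm : 0 < m) :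
    trigTransform ε F (expMonomial (-m)) = (1 / 2 : ℂ) • taylorCoeff F m := by
  rw [trigTransform, LinearMap.comp_apply, parityPart_expMonomial, neg_neg,
    boundaryValue_expMonomial_neg hF, boundaryValue_expMonomial_eq_zero hF (by lia), smul_zero,
    add_zero]

lemma herglotz_trigTransform (hF : F ∈ moderateSpace Y) (h0 : F 0 = ε • F 0) {z : ℂ}
    (hz : ‖z‖ < 1) : herglotz (trigTransform ε F) z = F z := by
  have hcoeff (m : ℕ) :
      herglotzCoeff m • trigTransform ε F (expMonomial (-m)) = taylorCoeff F m := by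
    rcases m.eq_zero_or_pos with rfl | hm
    · simp [herglotzCoeff, trigTransform_expMonomial_zero hF h0, taylorCoeff_zero]
    · rw [trigTransform_expMonomial_neg hF ε hm, herglotzCoeff, if_neg hm.ne']
      module
  have hsum := (isPeriodicDistributionC_trigTransform hF ε).hasSum_herglotz hz
  simp only [hcoeff] at hsum
  exact hsum.unique (hasSum_taylorCoeff hF.1 hz)

lemma IsPeriodicDistributionC.herglotz_apply_zero (hu : IsPeriodicDistributionC u) :
    herglotz u 0 = u (expMonomial 0) := by
  rw [← taylorCoeff_zero (herglotz u), hu.taylorCoeff_herglotz]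
  simp [herglotzCoeff]

lemma IsPeriodicDistributionC.herglotz_zero_eq_smul (hu : IsPeriodicDistributionC u)
    (hpar : HasParity ε u) : herglotz u 0 = ε • herglotz u 0 := by
  simpa [hu.herglotz_apply_zero] using hpar.apply_expMonomial 0

lemma IsPeriodicDistributionC.trigTransform_herglotz (hu : IsPeriodicDistributionC u)
    (hε : ε ^ 2 = 1) (hpar : HasParity ε u) {g : ℝ → ℂ} (hg : Smooth1PeriodicC g) :
    trigTransform ε (herglotz u) g = u g := by
  have hH := hu.herglotz_mem_moderateSpace
  have hneg (m : ℕ) : trigTransform ε (herglotz u) (expMonomial (-m)) = u (expMonomial (-m)) := by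
    rcases m.eq_zero_or_pos with rfl | hm
    · simp [trigTransform_expMonomial_zero hH (hu.herglotz_zero_eq_smul hpar),
        hu.herglotz_apply_zero]
    · rw [trigTransform_expMonomial_neg hH ε hm, hu.taylorCoeff_herglotz, herglotzCoeff,
        if_neg hm.ne']
      module
  refine (isPeriodicDistributionC_trigTransform hH ε).ext_expMonomial hu (fun n => ?_) hg
  obtain ⟨m, rfl | rfl⟩ := n.eq_nat_or_neg
  · have hpos := (hasParity_trigTransform hε (herglotz u)).apply_expMonomial (-m)
    rw [neg_neg] at hpos
    rw [hpos, hneg, ← hpar.apply_expMonomial, neg_neg]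
  · exact hneg m

lemma memHpD.inv_two_mul_qHpD_le (hp : 0 < p) (hε : ε ^ 2 = 1) (hc : ‖c‖ = 1) (hF : memHpD p F)
    (h0 : F 0 = ε • F 0) : 2⁻¹ * qHpD p F ≤ qHpT p ((c • trigTransform ε) F) := by
  have hFm := hF.mem_moderateSpace hp
  rw [LinearMap.smul_apply, qHpT_const_smul hc, ENNReal.inv_mul_le_iff two_ne_zero ofNat_ne_top,
    ← qHpD_congr fun z hz => herglotz_trigTransform hFm h0 (mem_ball_zero_iff.1 hz)]
  exact (isPeriodicDistributionC_trigTransform hFm ε).qHpD_herglotz_le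
    (hasParity_trigTransform hε F) hp

lemma memHpD.qHpT_trigTransform_le (hp : 0 < p) (hε : ε ^ 2 = 1) (hc : ‖c‖ = 1)
    (hF : memHpD p F) (h0 : F 0 = ε • F 0) :
    qHpT p ((c • trigTransform ε) F) ≤ 4 ^ (1 / p) * qHpD p F := by
  have hFm := hF.mem_moderateSpace hp
  rw [LinearMap.smul_apply, qHpT_const_smul hc,
    ← qHpD_congr fun z hz => herglotz_trigTransform hFm h0 (mem_ball_zero_iff.1 hz)]
  exact (isPeriodicDistributionC_trigTransform hFm ε).qHpT_le (hasParity_trigTransform hε F)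
    (Complex.norm_eq_one_of_pow_eq_one hε two_ne_zero) hp

lemma memHpD.memHpT_trigTransform (hp : 0 < p) (hε : ε ^ 2 = 1) (hc : ‖c‖ = 1)
    (hF : memHpD p F) (h0 : F 0 = ε • F 0) : memHpT p ((c • trigTransform ε) F) := by
  refine ⟨(isPeriodicDistributionC_trigTransform (hF.mem_moderateSpace hp) ε).const_smul c,
    (hF.qHpT_trigTransform_le hp hε hc h0).trans_lt ?_⟩
  refine ENNReal.mul_lt_top ?_ ((memHpD_iff hp).1 hF).2
  exact ENNReal.rpow_lt_top_of_nonneg (by positivity) ofNat_ne_top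

lemma memHpT.memHpD_herglotz (hp : 0 < p) (hu : memHpT p u) (hpar : HasParity ε u) :
    memHpD p (herglotz u) :=
  (memHpD_iff hp).2 ⟨hu.1.herglotz_mem_moderateSpace.1,
    (hu.1.qHpD_herglotz_le hpar hp).trans_lt (ENNReal.mul_lt_top ofNat_lt_top hu.2)⟩

lemma memHpT.exists_trigTransform_eq (hp : 0 < p) (hε : ε ^ 2 = 1) (hc : ‖c‖ = 1)
    (hu : memHpT p u) (hpar : HasParity ε u) :
    ∃ F, memHpD p F ∧ F 0 = ε • F 0 ∧
      ∀ g, Smooth1PeriodicC g → (c • trigTransform ε) F g = u g := by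
  have hc0 : c ≠ 0 := norm_ne_zero_iff.1 (hc ▸ one_ne_zero)
  have hv : memHpT p (c⁻¹ • u) := hu.const_smul (by rw [norm_inv, hc, inv_one])
  have hvpar : HasParity ε (c⁻¹ • u) := hpar.const_smul c⁻¹
  refine ⟨herglotz (c⁻¹ • u), hv.memHpD_herglotz hp hvpar, hv.1.herglotz_zero_eq_smul hvpar,
    fun g hg => ?_⟩
  rw [LinearMap.smul_apply, Pi.smul_apply, hv.1.trigTransform_herglotz hε hvpar hg, Pi.smul_apply,
    smul_inv_smul₀ hc0]

lemma trigTransform_isomorphism (hp : 0 < p) (hε : ε ^ 2 = 1) (hc : ‖c‖ = 1) :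
    ∃ k K : ℝ≥0∞, 0 < k ∧ K < ⊤ ∧
      (∀ F : ℂ → Y, memHpD p F → F 0 = ε • F 0 →
        memHpT p ((c • trigTransform ε) F) ∧ HasParity ε ((c • trigTransform ε) F) ∧
          k * qHpD p F ≤ qHpT p ((c • trigTransform ε) F) ∧
          qHpT p ((c • trigTransform ε) F) ≤ K * qHpD p F) ∧
      (∀ u : (ℝ → ℂ) → Y, memHpT p u → HasParity ε u → ∃ F, memHpD p F ∧ F 0 = ε • F 0 ∧
        ∀ g, Smooth1PeriodicC g → (c • trigTransform ε) F g = u g) :=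
  ⟨2⁻¹, 4 ^ (1 / p), by simp, ENNReal.rpow_lt_top_of_nonneg (by positivity) ofNat_ne_top,
    fun F hF h0 => ⟨hF.memHpT_trigTransform hp hε hc h0,
      (hasParity_trigTransform hε F).const_smul c, hF.inv_two_mul_qHpD_le hp hε hc h0,
      hF.qHpT_trigTransform_le hp hε hc h0⟩,
    fun _ hu hpar => hu.exists_trigTransform_eq hp hε hc hpar⟩

end TrigTransform

lemma setIntegral_I₀_mul_trig {g : ℝ → ℂ} (hg : Continuous g) (ε : ℂ) (n : ℤ) :
    ∫ t in I₀, g t * (expMonomial n t + ε * expMonomial (-n) t) =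
      testCoeff g (-n) + ε * testCoeff g n := by
  have hint (n : ℤ) : IntegrableOn (fun t => g t * expMonomial n t) I₀ :=
    integrableOn_I₀ (hg.mul (continuous_expMonomial n))
  simp only [testCoeff, neg_neg, ← integral_const_mul]
  rw [← integral_add (hint n) ((hint (-n)).const_mul ε)]
  congr 1 with t
  ring

lemma setIntegral_I₀_mul_cos {g : ℝ → ℂ} (hg : Continuous g) (n : ℕ) :
    ∫ t in I₀, g t * (Real.cos (2 * Real.pi * n * t) : ℂ) =
      (1 / 2 : ℂ) * (testCoeff g (-n) + testCoeff g n) := by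
  rw [← one_mul (testCoeff g n), ← setIntegral_I₀_mul_trig hg, ← integral_const_mul]
  congr 1 with t
  simp only [Complex.ofReal_cos, Complex.cos, expMonomial_eq_exp]
  push_cast
  ring_nf

lemma setIntegral_I₀_mul_sin {g : ℝ → ℂ} (hg : Continuous g) (n : ℕ) :
    ∫ t in I₀, g t * (Real.sin (2 * Real.pi * n * t) : ℂ) =
      -Complex.I * ((1 / 2 : ℂ) * (testCoeff g (-n) - testCoeff g n)) := by
  rw [sub_eq_add_neg, ← neg_one_mul (testCoeff g n), ← setIntegral_I₀_mul_trig hg,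
    ← integral_const_mul, ← integral_const_mul]
  congr 1 with t
  simp only [Complex.ofReal_sin, Complex.sin, expMonomial_eq_exp]
  push_cast
  ring_nf

theorem cosine_sine_isomorphisms_general {Y : Type*}
    [NormedAddCommGroup Y] [NormedSpace ℂ Y] [CompleteSpace Y] (p : ℝ) (hp : 0 < p) :
    (∃ Se : (ℂ → Y) →ₗ[ℂ] ((ℝ → ℂ) → Y),
      (∀ (n : ℕ) (x : Y) (g : ℝ → ℂ), Smooth1PeriodicC g →
        Se (fun z => z ^ n • x) g =
          (∫ t in I₀, g t * (Real.cos (2 * Real.pi * n * t) : ℂ)) • x) ∧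
      ∃ c C : ℝ≥0∞, 0 < c ∧ C < ⊤ ∧
        (∀ F, memHpD p F → memHpT p (Se F) ∧ IsEvenDistr (Se F) ∧
          c * qHpD p F ≤ qHpT p (Se F) ∧ qHpT p (Se F) ≤ C * qHpD p F) ∧
        (∀ u, memHpT p u → IsEvenDistr u →
          ∃ F, memHpD p F ∧ ∀ g, Smooth1PeriodicC g → Se F g = u g)) ∧
    (∃ So : (ℂ → Y) →ₗ[ℂ] ((ℝ → ℂ) → Y),
      (∀ (n : ℕ) (x : Y) (g : ℝ → ℂ), Smooth1PeriodicC g →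
        So (fun z => z ^ (n + 1) • x) g =
          (∫ t in I₀, g t * (Real.sin (2 * Real.pi * (n + 1) * t) : ℂ)) • x) ∧
      ∃ c C : ℝ≥0∞, 0 < c ∧ C < ⊤ ∧
        (∀ F, memHpD p F → F 0 = 0 → memHpT p (So F) ∧ IsOddDistr (So F) ∧
          c * qHpD p F ≤ qHpT p (So F) ∧ qHpT p (So F) ≤ C * qHpD p F) ∧
        (∀ u, memHpT p u → IsOddDistr u →
          ∃ F, memHpD p F ∧ F 0 = 0 ∧ ∀ g, Smooth1PeriodicC g → So F g = u g)) := by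
  have hzero (y : Y) : y = (-1 : ℂ) • y ↔ y = 0 := by
    have := IsAddTorsionFree.of_isTorsionFree ℂ Y
    rw [neg_one_smul, self_eq_neg]
  have hcos := trigTransform_isomorphism (Y := Y) (ε := 1) (c := 1) hp (one_pow 2) norm_one
  have hsin := trigTransform_isomorphism (Y := Y) (ε := -1) (c := -Complex.I) hp (by norm_num)
    (by simp)
  simp only [isEvenDistr_iff_hasParity, isOddDistr_iff_hasParity]
  refine ⟨⟨(1 : ℂ) • trigTransform 1, fun n x g hg => ?_, ?_⟩,
    ⟨-Complex.I • trigTransform (-1), fun n x g hg => ?_, ?_⟩⟩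
  · rw [setIntegral_I₀_mul_cos hg.1.continuous, one_smul, trigTransform_pow_smul 1 n x hg, one_mul]
  · simpa only [one_smul, true_imp_iff, true_and] using hcos
  · have h := setIntegral_I₀_mul_sin hg.1.continuous (n + 1)
    rw [Nat.cast_add_one (R := ℝ)] at h
    rw [h, LinearMap.smul_apply, Pi.smul_apply, trigTransform_pow_smul (-1) (n + 1) x hg, smul_smul,
      neg_one_mul, ← sub_eq_add_neg]
  · simpa only [hzero] using hsin

theorem cosine_sine_isomorphisms {X Y : Type*}
    [NormedAddCommGroup X] [NormedSpace ℝ X] [CompleteSpace X]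
    [NormedAddCommGroup Y] [NormedSpace ℂ Y] [CompleteSpace Y]
    (ι : X →ₗ[ℝ] Y) (ReY ImY : Y →ₗ[ℝ] X)
    (hdecomp : ∀ y : Y, y = ι (ReY y) + Complex.I • ι (ImY y))
    (hReι : ∀ x, ReY (ι x) = x) (hImι : ∀ x, ImY (ι x) = 0)
    (hbd : ∃ Cb : ℝ, 0 < Cb ∧ (∀ y, ‖ReY y‖ ≤ Cb * ‖y‖) ∧ (∀ y, ‖ImY y‖ ≤ Cb * ‖y‖) ∧
      ∀ x, ‖ι x‖ ≤ Cb * ‖x‖)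
    (p : ℝ) (hp : 0 < p) (hp1 : p ≤ 1) :
    -- (i) the cosine map `S_e : H_p(𝔻,Y) ≃ H_{p,e}(𝕋,Y)`
    (∃ Se : (ℂ → Y) →ₗ[ℂ] ((ℝ → ℂ) → Y),
      (∀ (n : ℕ) (x : Y) (g : ℝ → ℂ), Smooth1PeriodicC g →
        Se (fun z => z ^ n • x) g =
          (∫ t in I₀, g t * (Real.cos (2 * Real.pi * n * t) : ℂ)) • x) ∧
      ∃ c C : ℝ≥0∞, 0 < c ∧ C < ⊤ ∧
        (∀ F, memHpD p F → memHpT p (Se F) ∧ IsEvenDistr (Se F) ∧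
          c * qHpD p F ≤ qHpT p (Se F) ∧ qHpT p (Se F) ≤ C * qHpD p F) ∧
        (∀ u, memHpT p u → IsEvenDistr u →
          ∃ F, memHpD p F ∧ ∀ g, Smooth1PeriodicC g → Se F g = u g)) ∧
    -- (ii) the sine map `S_o : H_{p,0}(𝔻,Y) ≃ H_{p,o}(𝕋,Y)`
    (∃ So : (ℂ → Y) →ₗ[ℂ] ((ℝ → ℂ) → Y),
      (∀ (n : ℕ) (x : Y) (g : ℝ → ℂ), Smooth1PeriodicC g →
        So (fun z => z ^ (n + 1) • x) g =
          (∫ t in I₀, g t * (Real.sin (2 * Real.pi * (n + 1) * t) : ℂ)) • x) ∧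
      ∃ c C : ℝ≥0∞, 0 < c ∧ C < ⊤ ∧
        (∀ F, memHpD p F → F 0 = 0 → memHpT p (So F) ∧ IsOddDistr (So F) ∧
          c * qHpD p F ≤ qHpT p (So F) ∧ qHpT p (So F) ≤ C * qHpD p F) ∧
        (∀ u, memHpT p u → IsOddDistr u →
          ∃ F, memHpD p F ∧ F 0 = 0 ∧ ∀ g, Smooth1PeriodicC g → So F g = u g)) :=
  cosine_sine_isomorphisms_general p hp

end
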